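/- There exists a simple H-submodule of ℂP with lower endpoint (ν, μ) and index ρ if and only if 0 ≤ ν ≤ a, 0 ≤ μ ≤ b, and max{0, 2μ − b} ≤ ρ ≤ min{a − 2ν, μ}. -/

import Mathlib

open Module

/-- The q-Pochhammer symbol `(q;q)_n = ∏_{ℓ=0}^{n-1} (1 - q^ℓ)`. -/
noncomputable def qPoch (q : ℂ) (n : ℕ) : ℂ := ∏ l ∈ Finset.range n, (1 - q ^ l)

/-- The q-Pochhammer symbol with an integer index (junk value for negative index). -/
noncomputable def qPochZ (q : ℂ) (n : ℤ) : ℂ := qPoch q n.toNat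

/-- The Gaussian binomial coefficient `[m, n]_q`, with the convention that it
vanishes unless `0 ≤ n ≤ m`. -/
noncomputable def qGauss (q : ℂ) (m n : ℤ) : ℂ :=
  if 0 ≤ n ∧ n ≤ m then qPoch q m.toNat / (qPoch q n.toNat * qPoch q (m - n).toNat) else 0

/-- A subspace `W ≤ ℂ^ι` is stable under a subalgebra of matrices. -/
def MatStable {ι : Type} [Fintype ι] [DecidableEq ι] (Hg : Subalgebra ℂ (Matrix ι ι ℂ))
    (W : Submodule ℂ (ι → ℂ)) : Prop :=
  ∀ M ∈ Hg, W.map (Matrix.mulVecLin M) ≤ W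

/-- `W` is a simple (irreducible) module of a subalgebra of matrices:
it is stable, nonzero, and has no nontrivial stable subspaces. -/
def MatSimple {ι : Type} [Fintype ι] [DecidableEq ι] (Hg : Subalgebra ℂ (Matrix ι ι ℂ))
    (W : Submodule ℂ (ι → ℂ)) : Prop :=
  MatStable Hg W ∧ W ≠ ⊥ ∧
    ∀ U : Submodule ℂ (ι → ℂ), U ≤ W → MatStable Hg U → U = ⊥ ∨ U = W

/-- Two subspaces of `ℂ^ι` are isomorphic as modules of a subalgebra of matrices. -/
def MatIso {ι : Type} [Fintype ι] [DecidableEq ι] (Hg : Subalgebra ℂ (Matrix ι ι ℂ))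
    (W W' : Submodule ℂ (ι → ℂ)) : Prop :=
  ∃ φ : W ≃ₗ[ℂ] W', ∀ M ∈ Hg, ∀ v : ι → ℂ, ∀ hv : v ∈ W, ∀ hMv : M.mulVec v ∈ W,
    (φ ⟨M.mulVec v, hMv⟩ : ι → ℂ) = M.mulVec (φ ⟨v, hv⟩ : ι → ℂ)

/-- The space of `Hg`-equivariant linear maps `W → ℂ^ι`; its dimension is the
multiplicity of `W` in `ℂ^ι` when `W` is simple. -/
noncomputable def MatHom {ι : Type} [Fintype ι] [DecidableEq ι] (Hg : Subalgebra ℂ (Matrix ι ι ℂ))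
    (W : Submodule ℂ (ι → ℂ)) : Submodule ℂ (W →ₗ[ℂ] (ι → ℂ)) where
  carrier := {φ | ∀ M ∈ Hg, ∀ v : ι → ℂ, ∀ hv : v ∈ W, ∀ hMv : M.mulVec v ∈ W,
    φ ⟨M.mulVec v, hMv⟩ = M.mulVec (φ ⟨v, hv⟩)}
  zero_mem' := by
    intro M _ v hv hMv
    simp [Matrix.mulVec_zero]
  add_mem' := by
    intro φ ψ hφ hψ M hM v hv hMv
    simp [hφ M hM v hv hMv, hψ M hM v hv hMv, Matrix.mulVec_add]
  smul_mem' := by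
    intro c φ hφ M hM v hv hMv
    simp [hφ M hM v hv hMv, Matrix.mulVec_smul]

section Untwisted

variable (F : Type) [Field F] [Fintype F] (a b : ℕ)

open Classical in
/-- The diagonal matrix `E*_{i,j}` (with respect to `x`), indexed by the
subspaces of `(F_q)^{a+b}`. -/
noncomputable def Estar (x : Submodule F (Fin (a + b) → F)) (i j : ℤ) :
    Matrix (Submodule F (Fin (a + b) → F)) (Submodule F (Fin (a + b) → F)) ℂ :=
  Matrix.diagonal fun y =>
    if (finrank F ↥(x ⊓ y) : ℤ) = i ∧ (finrank F y : ℤ) = i + j then 1 else 0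

open Classical in
/-- The lowering matrix `L₁`: entry `(y,z)` is `1` iff `z ∈ P_{i,j}`,
`y ∈ P_{i-1,j}` and `y ⊂ z`. -/
noncomputable def Lone (x : Submodule F (Fin (a + b) → F)) :
    Matrix (Submodule F (Fin (a + b) → F)) (Submodule F (Fin (a + b) → F)) ℂ :=
  fun y z => if y ≤ z ∧ finrank F y + 1 = finrank F z ∧
    finrank F ↥(x ⊓ y) + 1 = finrank F ↥(x ⊓ z) then 1 else 0

open Classical in
/-- The lowering matrix `L₂`: entry `(y,z)` is `1` iff `z ∈ P_{i,j}`,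
`y ∈ P_{i,j-1}` and `y ⊂ z`. -/
noncomputable def Ltwo (x : Submodule F (Fin (a + b) → F)) :
    Matrix (Submodule F (Fin (a + b) → F)) (Submodule F (Fin (a + b) → F)) ℂ :=
  fun y z => if y ≤ z ∧ finrank F y + 1 = finrank F z ∧
    finrank F ↥(x ⊓ y) = finrank F ↥(x ⊓ z) then 1 else 0

open Classical in
/-- The raising matrix `R₁`: entry `(y,z)` is `1` iff `z ∈ P_{i,j}`,
`y ∈ P_{i+1,j}` and `y ⊃ z`. -/
noncomputable def Rone (x : Submodule F (Fin (a + b) → F)) :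
    Matrix (Submodule F (Fin (a + b) → F)) (Submodule F (Fin (a + b) → F)) ℂ :=
  fun y z => if z ≤ y ∧ finrank F z + 1 = finrank F y ∧
    finrank F ↥(x ⊓ z) + 1 = finrank F ↥(x ⊓ y) then 1 else 0

open Classical in
/-- The raising matrix `R₂`: entry `(y,z)` is `1` iff `z ∈ P_{i,j}`,
`y ∈ P_{i,j+1}` and `y ⊃ z`. -/
noncomputable def Rtwo (x : Submodule F (Fin (a + b) → F)) :
    Matrix (Submodule F (Fin (a + b) → F)) (Submodule F (Fin (a + b) → F)) ℂ :=
  fun y z => if z ≤ y ∧ finrank F z + 1 = finrank F y ∧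
    finrank F ↥(x ⊓ z) = finrank F ↥(x ⊓ y) then 1 else 0

open Classical in
/-- The algebra `H` generated by `L₁, L₂, R₁, R₂` and the `E*_{i,j}`. -/
noncomputable def Halg (x : Submodule F (Fin (a + b) → F)) :
    Subalgebra ℂ (Matrix (Submodule F (Fin (a + b) → F)) (Submodule F (Fin (a + b) → F)) ℂ) :=
  Algebra.adjoin ℂ
    ({Lone F a b x, Ltwo F a b x, Rone F a b x, Rtwo F a b x} ∪
      {M | ∃ i : ℕ, i ≤ a ∧ ∃ j : ℕ, j ≤ b ∧ M = Estar F a b x i j})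

open Classical in
/-- The quantity `ν` of the lower endpoint of `W`. -/
noncomputable def lowNu (x : Submodule F (Fin (a + b) → F))
    (W : Submodule ℂ (Submodule F (Fin (a + b) → F) → ℂ)) : ℕ :=
  sInf {i : ℕ | W.map (∑ j ∈ Finset.range (b + 1), Estar F a b x i j).mulVecLin ≠ ⊥}

open Classical in
/-- The quantity `ν'` of the upper endpoint of `W`. -/
noncomputable def upNu (x : Submodule F (Fin (a + b) → F))
    (W : Submodule ℂ (Submodule F (Fin (a + b) → F) → ℂ)) : ℕ :=
  sSup {i : ℕ | W.map (∑ j ∈ Finset.range (b + 1), Estar F a b x i j).mulVecLin ≠ ⊥}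

open Classical in
/-- The quantity `μ` of the lower endpoint of `W`. -/
noncomputable def lowMu (x : Submodule F (Fin (a + b) → F))
    (W : Submodule ℂ (Submodule F (Fin (a + b) → F) → ℂ)) : ℕ :=
  sInf {j : ℕ | W.map (∑ i ∈ Finset.range (a + 1), Estar F a b x i j).mulVecLin ≠ ⊥}

open Classical in
/-- The index `ρ = a - ν - ν'` of `W`. -/
noncomputable def idxH (x : Submodule F (Fin (a + b) → F))
    (W : Submodule ℂ (Submodule F (Fin (a + b) → F) → ℂ)) : ℤ :=
  (a : ℤ) - lowNu F a b x W - upNu F a b x W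

end Untwisted

/-!
Let `q = |F|`. The matrix `Ω = q^{i-j} (q-1) [L₁, R₁] + q^{2i}`, with `(i, j)` read off the cell,
commutes with `H`, so it acts on a simple module `W` by a scalar. On `W` the pairs `(L₁, R₁)` and
`(L₂, R₂)` behave like quantum `sl₂`. The `R₁`-chain from the lowest row and the `L₁`-chain from
the highest row force the scalar to be `q^{ν+ν'} = q^{a-ρ}`; the `R₂`-chain from the lowest column
then ends after `ℓ ≥ 0` steps, where `ν + ν' + 2μ + ℓ = a + b` and `μ + ℓ ≤ b`, that is,
`2μ - b ≤ ρ ≤ μ`. Clearly `ν ≤ ν'`, and a Perron-Frobenius comparison with the positive vectors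
`R₂ʲ R₁ⁱ e₀`, which have eigenvalue `q^a`, gives `ρ ≥ 0`.

Conversely, let `w` be an eigenvector of `Ω` in the cell `(ν, μ)` killed by `L₁` and `L₂`. The
vectors `R₂ⁿ R₁ᵐ w` span `Hw`, so `Hw` meets that cell in a line, and since `H` is closed under
adjoints `Hw` is simple. Such a `w` is supported on the orbit of one subspace `range p` under an
abelian group of shears `1 + Θ`, which acts on `w` through the character `χ(tr(KΘ))`; the rank of
`K` on `x ∩ ker p` tunes `ρ`.
-/

section SubspaceLattice

variable {F V : Type*} [Field F] [AddCommGroup V] [Module F V]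

lemma exists_covBy_inf_covBy {x y : Submodule F V} (h : x ⊓ y ≠ ⊥) :
    ∃ z, z ⋖ y ∧ x ⊓ z ⋖ x ⊓ y := by
  obtain ⟨v, hv, hv0⟩ := Submodule.exists_mem_ne_zero_of_ne_bot h
  obtain ⟨H, hH⟩ := Submodule.exists_isCompl (Submodule.span F {v})
  have hcoatom : IsCoatom H := hH.isAtom_iff_isCoatom.1 (nonzero_span_atom v hv0)
  have hvH : v ∉ H := fun hvH => hv0 <| (Submodule.mem_bot F).1 <|
    hH.disjoint.le_bot ⟨Submodule.mem_span_singleton_self v, hvH⟩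
  have hcov : ∀ u, v ∈ u → H ⊓ u ⋖ u := fun u hvu => by
    refine CovBy.inf_of_sup_left ?_
    rw [hcoatom.2 _ (left_lt_sup.2 fun hu => hvH (hu hvu))]
    exact hcoatom.covBy_top
  refine ⟨H ⊓ y, hcov y hv.2, ?_⟩
  rw [inf_left_comm]
  exact hcov (x ⊓ y) hv

variable [FiniteDimensional F V]

lemma finrank_inf_mono (x : Submodule F V) {y z : Submodule F V} (h : y ≤ z) :
    finrank F ↥(x ⊓ y) ≤ finrank F ↥(x ⊓ z) :=
  Submodule.finrank_mono (inf_le_inf_left x h)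

lemma finrank_add_finrank_inf_le (x : Submodule F V) {y z : Submodule F V} (h : y ≤ z) :
    finrank F y + finrank F ↥(x ⊓ z) ≤ finrank F z + finrank F ↥(x ⊓ y) := by
  have hdim := Submodule.finrank_sup_add_finrank_inf_eq y (x ⊓ z)
  have hinf : y ⊓ (x ⊓ z) = x ⊓ y := by rw [inf_left_comm, inf_eq_left.2 h]
  rw [hinf] at hdim
  have hsup := Submodule.finrank_mono (sup_le h inf_le_right : y ⊔ x ⊓ z ≤ z)
  lia

lemma finrank_inf_add_finrank_inf_le (x y z : Submodule F V) :
    finrank F ↥(x ⊓ y) + finrank F ↥(x ⊓ z) ≤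
      finrank F ↥(x ⊓ (y ⊔ z)) + finrank F ↥(x ⊓ (y ⊓ z)) := by
  rw [← Submodule.finrank_sup_add_finrank_inf_eq (x ⊓ y) (x ⊓ z), ← inf_inf_distrib_left]
  gcongr
  exact Submodule.finrank_mono le_inf_sup

lemma covBy_iff_finrank {y z : Submodule F V} :
    y ⋖ z ↔ y ≤ z ∧ finrank F y + 1 = finrank F z := by
  constructor
  · intro h
    obtain ⟨v, hvz, hvy⟩ := SetLike.exists_of_lt h.lt
    have hlt : y < y ⊔ Submodule.span F {v} :=
      left_lt_sup.2 fun hle => hvy (hle (Submodule.mem_span_singleton_self v))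
    have hle : y ⊔ Submodule.span F {v} ≤ z :=
      sup_le h.le ((Submodule.span_singleton_le_iff_mem v z).2 hvz)
    rw [← (h.wcovBy.eq_or_eq hlt.le hle).resolve_left hlt.ne',
      Submodule.finrank_sup_span_singleton hvy]
    exact ⟨le_sup_left, rfl⟩
  · rintro ⟨hle, hdim⟩
    refine ⟨lt_of_le_of_ne hle fun h => by subst h; lia, fun u hyu huz => ?_⟩
    have := Submodule.finrank_lt_finrank_of_lt hyu
    have := Submodule.finrank_lt_finrank_of_lt huz
    lia

lemma sup_eq_of_finrank_add_one {y z u : Submodule F V} (hyz : y ≠ z) (hyu : y ≤ u)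
    (hzu : z ≤ u) (hy : finrank F y + 1 = finrank F u) (hz : finrank F z + 1 = finrank F u) :
    y ⊔ z = u :=
  (covBy_iff_finrank.2 ⟨hyu, hy⟩).wcovBy.sup_eq (covBy_iff_finrank.2 ⟨hzu, hz⟩).wcovBy hyz

lemma inf_eq_of_finrank_add_one {y z u : Submodule F V} (hyz : y ≠ z) (huy : u ≤ y)
    (huz : u ≤ z) (hy : finrank F u + 1 = finrank F y) (hz : finrank F u + 1 = finrank F z) :
    y ⊓ z = u :=
  (covBy_iff_finrank.2 ⟨huy, hy⟩).wcovBy.inf_eq (covBy_iff_finrank.2 ⟨huz, hz⟩).wcovBy hyz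

end SubspaceLattice

section CoverCount

section Cardinality

variable {F : Type*} [Field F] [Finite F]

lemma natCard_ne_zero_complex : (Nat.card F : ℂ) ≠ 0 := by
  exact_mod_cast Nat.card_pos.ne'

lemma natCard_sub_one_ne_zero_complex : (Nat.card F : ℂ) - 1 ≠ 0 :=
  sub_ne_zero.2 (by exact_mod_cast Finite.one_lt_card.ne')

end Cardinality

lemma coe_sdiff_coe_eq_biUnion_covers {F V : Type*} [Field F] [AddCommGroup V] [Module F V]
    {y z : Submodule F V} (h : y ≤ z) :
    (z : Set V) \ y = ⋃ u ∈ {u | y ⋖ u ∧ u ≤ z}, (u : Set V) \ y := by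
  ext v
  simp only [Set.mem_iUnion, Set.mem_sdiff, SetLike.mem_coe, exists_prop]
  constructor
  · rintro ⟨hvz, hvy⟩
    refine ⟨_, ⟨Submodule.covBy_span_singleton_sup hvy, sup_le ?_ h⟩,
      Submodule.mem_sup_left (Submodule.mem_span_singleton_self v), hvy⟩
    exact (Submodule.span_singleton_le_iff_mem v z).2 hvz
  · rintro ⟨u, ⟨-, huz⟩, hvu, hvy⟩
    exact ⟨huz hvu, hvy⟩

variable {F V : Type*} [Field F] [AddCommGroup V] [Module F V] [FiniteDimensional F V]

lemma ncard_coe_submodule (y : Submodule F V) :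
    (y : Set V).ncard = Nat.card F ^ finrank F y := by
  rw [← Nat.card_coe_set_eq]
  exact Module.natCard_eq_pow_finrank (K := F) (V := y)

variable [Finite F]

lemma ncard_coe_sdiff_coe {y z : Submodule F V} (h : y ≤ z) :
    (((z : Set V) \ y).ncard : ℂ) = Nat.card F ^ finrank F z - Nat.card F ^ finrank F y := by
  have : Finite V := Module.finite_of_finite F
  have hle : (y : Set V) ⊆ z := h
  have := Set.ncard_sdiff_add_ncard_of_subset hle
  rw [ncard_coe_submodule, ncard_coe_submodule] at this
  rw [eq_sub_iff_add_eq]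
  exact_mod_cast this

lemma ncard_covers {y z : Submodule F V} (h : y ≤ z) :
    ({u | y ⋖ u ∧ u ≤ z}.ncard : ℂ) =
      (Nat.card F ^ finrank F z / Nat.card F ^ finrank F y - 1) / (Nat.card F - 1) := by
  have : Finite V := Module.finite_of_finite F
  have hfin : {u | y ⋖ u ∧ u ≤ z}.Finite := Set.toFinite _
  have hdisj : {u | y ⋖ u ∧ u ≤ z}.PairwiseDisjoint fun u => (u : Set V) \ y := by
    intro u hu u' hu' hne
    refine Set.disjoint_left.2 fun v hv hv' => hv.2 ?_
    rw [← hu.1.wcovBy.inf_eq hu'.1.wcovBy hne]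
    exact ⟨hv.1, hv'.1⟩
  have hcount := congrArg (Nat.cast (R := ℂ))
    (hfin.ncard_biUnion (fun _ _ => Set.toFinite _) hdisj)
  rw [← coe_sdiff_coe_eq_biUnion_covers h, ncard_coe_sdiff_coe h,
    finsum_mem_eq_finite_toFinset_sum _ hfin, Nat.cast_sum,
    Finset.sum_congr rfl (g := fun _ => (Nat.card F : ℂ) ^ finrank F y * (Nat.card F - 1)),
    Finset.sum_const, ← Set.ncard_eq_toFinset_card _ hfin, nsmul_eq_mul] at hcount
  · have := natCard_ne_zero_complex (F := F)
    have := natCard_sub_one_ne_zero_complex (F := F)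
    field_simp
    linear_combination -hcount
  · intro u hu
    obtain ⟨hcov, -⟩ := hfin.mem_toFinset.1 hu
    rw [ncard_coe_sdiff_coe hcov.le, ← (covBy_iff_finrank.1 hcov).2]
    ring

lemma ncard_cocovers {y z : Submodule F V} (h : y ≤ z) :
    ({u | y ≤ u ∧ u ⋖ z}.ncard : ℂ) =
      (Nat.card F ^ finrank F z / Nat.card F ^ finrank F y - 1) / (Nat.card F - 1) := by
  have hdual := ncard_covers (Submodule.dualAnnihilator_anti h)
  have himage : {u | z.dualAnnihilator ⋖ u ∧ u ≤ y.dualAnnihilator} =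
      Submodule.dualAnnihilator '' {u | y ≤ u ∧ u ⋖ z} := by
    ext u
    obtain ⟨v, rfl⟩ : ∃ v : Submodule F V, v.dualAnnihilator = u :=
      ⟨_, Subspace.dualCoannihilator_dualAnnihilator_eq⟩
    have hcov : z.dualAnnihilator ⋖ v.dualAnnihilator ↔ v ⋖ z :=
      toDual_covBy_toDual_iff.symm.trans
        (apply_covBy_apply_iff Subspace.orderIsoFiniteDimensional)
    rw [Set.mem_ofPred_eq, hcov, Subspace.dualAnnihilator_le_dualAnnihilator_iff, and_comm,
      Function.Injective.mem_set_image fun u v huv => Subspace.dualAnnihilator_inj.1 huv,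
      Set.mem_ofPred_eq]
  rw [himage, Set.ncard_image_of_injective _ fun u v huv => Subspace.dualAnnihilator_inj.1 huv]
    at hdual
  rw [hdual]
  have hy := Subspace.finrank_add_finrank_dualAnnihilator_eq y
  have hz := Subspace.finrank_add_finrank_dualAnnihilator_eq z
  have := natCard_ne_zero_complex (F := F)
  congr 2
  rw [div_eq_div_iff (by positivity) (by positivity), ← pow_add, ← pow_add]
  congr 1
  lia


lemma ncard_cocovers_not_le {y z : Submodule F V} (h : y ≤ z) (hy : finrank F y = 1) :
    ({u | u ⋖ z ∧ ¬y ≤ u}.ncard : ℂ) = Nat.card F ^ finrank F z / Nat.card F := by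
  have : Finite V := Module.finite_of_finite F
  have hall := ncard_cocovers (bot_le : ⊥ ≤ z)
  have hinter : {u | ⊥ ≤ u ∧ u ⋖ z} ∩ {u | y ≤ u} = {u | y ≤ u ∧ u ⋖ z} := by
    ext u
    simp only [Set.mem_inter_iff, Set.mem_ofPred_eq, bot_le, true_and, and_comm]
  have hdiff : {u | ⊥ ≤ u ∧ u ⋖ z} \ {u | y ≤ u} = {u | u ⋖ z ∧ ¬y ≤ u} := by
    ext u
    simp only [Set.mem_sdiff, Set.mem_ofPred_eq, bot_le, true_and]
  rw [← Set.ncard_inter_add_ncard_sdiff_eq_ncard _ {u | y ≤ u} (Set.toFinite _), hinter, hdiff,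
    Nat.cast_add, ncard_cocovers h, hy, finrank_bot] at hall
  rw [eq_sub_of_add_eq' hall]
  have := natCard_ne_zero_complex (F := F)
  have := natCard_sub_one_ne_zero_complex (F := F)
  field_simp
  ring

end CoverCount

section Matrices

open Matrix

variable {F V : Type*} [Field F] [AddCommGroup V] [Module F V] (x : Submodule F V)

open Classical in
/-- The common form of the lowering matrices: `lowering x 1 0` is `L₁` and `lowering x 0 1` is `L₂`.
In general the entry `(y, z)` is `1` iff `y ≤ z`, `z ∈ P_{i,j}` and `y ∈ P_{i-s,j-t}`. -/
noncomputable def lowering (s t : ℕ) : Matrix (Submodule F V) (Submodule F V) ℂ :=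
  fun y z => if y ≤ z ∧ finrank F y + (s + t) = finrank F z ∧
    finrank F ↥(x ⊓ y) + s = finrank F ↥(x ⊓ z) then 1 else 0

/-- The common form of the raising matrices: `raising x 1 0` is `R₁` and `raising x 0 1` is `R₂`. -/
noncomputable def raising (s t : ℕ) : Matrix (Submodule F V) (Submodule F V) ℂ :=
  (lowering x s t)ᵀ

variable {x} {s t s' t' : ℕ} {y z : Submodule F V}

lemma of_lowering_apply_ne_zero (h : lowering x s t y z ≠ 0) :
    y ≤ z ∧ finrank F y + (s + t) = finrank F z ∧
      finrank F ↥(x ⊓ y) + s = finrank F ↥(x ⊓ z) := by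
  by_contra h'
  exact h (if_neg h')

lemma conjTranspose_lowering : (lowering x s t)ᴴ = raising x s t := by
  ext y z
  rw [conjTranspose_apply, lowering, apply_ite star, star_one, star_zero]
  rfl

lemma conjTranspose_raising : (raising x s t)ᴴ = lowering x s t := by
  rw [← conjTranspose_lowering, conjTranspose_conjTranspose]

variable [FiniteDimensional F V]

open Classical in
lemma lowering_one_zero_apply (x y z : Submodule F V) :
    lowering x 1 0 y z = if y ⋖ z ∧ z ≤ y ⊔ x then 1 else 0 := by
  unfold lowering
  congr 1
  rw [covBy_iff_finrank, eq_iff_iff, and_assoc]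
  refine and_congr_right fun hyz => and_congr_right fun hdim => ?_
  have hmod : z ≤ y ⊔ x ↔ z ≤ y ⊔ x ⊓ z := by
    rw [← sup_inf_assoc_of_le x hyz, le_inf_iff, and_iff_left le_rfl]
  have hsup := Submodule.finrank_sup_add_finrank_inf_eq y (x ⊓ z)
  rw [inf_left_comm, inf_eq_left.2 hyz] at hsup
  rw [hmod]
  constructor
  · intro hx
    exact (Submodule.eq_of_le_of_finrank_eq (sup_le hyz inf_le_right) (by lia)).ge
  · intro h
    rw [le_antisymm (sup_le hyz inf_le_right) h] at hsup
    lia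

variable [Fintype (Submodule F V)]

lemma lowering_mul_raising_apply (hst : s + t = 1) (hst' : s' + t' = 1) (hyz : y ≠ z) :
    (lowering x s t * raising x s' t') y z =
      lowering x s t y (y ⊔ z) * lowering x s' t' z (y ⊔ z) := by
  refine Finset.sum_eq_single_of_mem _ (Finset.mem_univ _) fun u _ hu => ?_
  by_contra hne
  obtain ⟨hyu, hdy, -⟩ := of_lowering_apply_ne_zero (left_ne_zero_of_mul hne)
  obtain ⟨hzu, hdz, -⟩ := of_lowering_apply_ne_zero (right_ne_zero_of_mul hne)
  exact hu (sup_eq_of_finrank_add_one hyz hyu hzu (by lia) (by lia)).symm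

lemma raising_mul_lowering_apply (hst : s + t = 1) (hst' : s' + t' = 1) (hyz : y ≠ z) :
    (raising x s t * lowering x s' t') y z =
      lowering x s t (y ⊓ z) y * lowering x s' t' (y ⊓ z) z := by
  refine Finset.sum_eq_single_of_mem _ (Finset.mem_univ _) fun u _ hu => ?_
  by_contra hne
  obtain ⟨huy, hdy, -⟩ := of_lowering_apply_ne_zero (left_ne_zero_of_mul hne)
  obtain ⟨huz, hdz, -⟩ := of_lowering_apply_ne_zero (right_ne_zero_of_mul hne)
  exact hu (inf_eq_of_finrank_add_one hyz huy huz (by lia) (by lia)).symm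

lemma lowering_one_zero_mul_raising_zero_one (x : Submodule F V) :
    lowering x 1 0 * raising x 0 1 = raising x 0 1 * lowering x 1 0 := by
  ext y z
  rcases eq_or_ne y z with rfl | hyz
  · have hup : (lowering x 1 0 * raising x 0 1) y y = 0 :=
      Finset.sum_eq_zero fun u _ => by
        by_contra hne
        obtain ⟨-, -, hx₁⟩ := of_lowering_apply_ne_zero (left_ne_zero_of_mul hne)
        obtain ⟨-, -, hx₂⟩ := of_lowering_apply_ne_zero (right_ne_zero_of_mul hne)
        lia
    have hdown : (raising x 0 1 * lowering x 1 0) y y = 0 :=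
      Finset.sum_eq_zero fun u _ => by
        by_contra hne
        obtain ⟨-, -, hx₁⟩ := of_lowering_apply_ne_zero (left_ne_zero_of_mul hne)
        obtain ⟨-, -, hx₂⟩ := of_lowering_apply_ne_zero (right_ne_zero_of_mul hne)
        lia
    rw [hup, hdown]
  · rw [lowering_mul_raising_apply rfl rfl hyz, raising_mul_lowering_apply rfl rfl hyz]
    have hdim := Submodule.finrank_sup_add_finrank_inf_eq y z
    have hzinf := finrank_add_finrank_inf_le x (inf_le_right : y ⊓ z ≤ z)
    have hysup := finrank_add_finrank_inf_le x (le_sup_left : y ≤ y ⊔ z)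
    have hyinf' := finrank_inf_mono x (inf_le_left : y ⊓ z ≤ y)
    have hzsup' := finrank_inf_mono x (le_sup_right : z ≤ y ⊔ z)
    simp only [lowering, le_sup_left, le_sup_right, inf_le_left, inf_le_right, true_and,
      ite_zero_mul_ite_zero, mul_one]
    congr 1
    rw [eq_iff_iff]
    lia

lemma sum_ite_one_zero_eq_ncard {ι : Type*} [Fintype ι] (p : ι → Prop) [DecidablePred p] :
    ∑ i, (if p i then (1 : ℂ) else 0) = ({i | p i} : Set ι).ncard := by
  rw [Finset.sum_boole, ← Set.ncard_coe_finset, Finset.coe_filter_univ]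

lemma raising_zero_one_mul_raising_one_zero_apply (hzy : z ≤ y)
    (hdim : finrank F z + 2 = finrank F y)
    (hx : finrank F ↥(x ⊓ z) + 1 = finrank F ↥(x ⊓ y)) :
    (raising x 0 1 * raising x 1 0) y z = 1 := by
  have hsup := Submodule.finrank_sup_add_finrank_inf_eq z (x ⊓ y)
  rw [inf_left_comm, inf_eq_left.2 hzy] at hsup
  have hxm : x ⊓ (z ⊔ x ⊓ y) = x ⊓ y :=
    le_antisymm (inf_le_inf_left x (sup_le hzy inf_le_right)) (le_inf inf_le_left le_sup_right)
  refine (Finset.sum_eq_single_of_mem (z ⊔ x ⊓ y) (Finset.mem_univ _) fun u _ hu => ?_).trans ?_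
  · by_contra hne
    obtain ⟨huy, hdu, hxu⟩ := of_lowering_apply_ne_zero (left_ne_zero_of_mul hne)
    obtain ⟨hzu, -, -⟩ := of_lowering_apply_ne_zero (right_ne_zero_of_mul hne)
    have hxyu : x ⊓ u = x ⊓ y :=
      Submodule.eq_of_le_of_finrank_eq (inf_le_inf_left x huy) (by lia)
    refine hu (Submodule.eq_of_le_of_finrank_eq (sup_le hzu ?_) (by lia)).symm
    exact hxyu ▸ inf_le_right
  · simp only [raising, transpose_apply, lowering]
    rw [if_pos ⟨sup_le hzy inf_le_right, by lia, by rw [hxm, add_zero]⟩,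
      if_pos ⟨le_sup_left, by lia, by rw [hxm, hx]⟩, mul_one]

lemma raising_one_zero_mul_raising_zero_one [Finite F] (x : Submodule F V) :
    raising x 1 0 * raising x 0 1 = (Nat.card F : ℂ) • (raising x 0 1 * raising x 1 0) := by
  ext y z
  rw [Matrix.smul_apply]
  by_cases h : z ≤ y ∧ finrank F z + 2 = finrank F y ∧
    finrank F ↥(x ⊓ z) + 1 = finrank F ↥(x ⊓ y)
  · obtain ⟨hzy, hdim, hx⟩ := h
    have hsum : (raising x 1 0 * raising x 0 1 + raising x 0 1 * raising x 1 0) y z =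
        ({u | z ⋖ u ∧ u ≤ y}.ncard : ℂ) := by
      classical
      rw [← sum_ite_one_zero_eq_ncard, Matrix.add_apply, Matrix.mul_apply, Matrix.mul_apply,
        ← Finset.sum_add_distrib]
      refine Finset.sum_congr rfl fun u _ => ?_
      have hle (huy : u ≤ y) := finrank_inf_mono x huy
      have hle' (hzu : z ≤ u) := finrank_inf_mono x hzu
      simp only [raising, transpose_apply, lowering, ite_zero_mul_ite_zero, mul_one,
        covBy_iff_finrank]
      split_ifs <;> first | norm_num; done | (exfalso; lia)
    rw [ncard_covers hzy, Matrix.add_apply,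
      raising_zero_one_mul_raising_one_zero_apply hzy hdim hx] at hsum
    rw [raising_zero_one_mul_raising_one_zero_apply hzy hdim hx, eq_sub_of_add_eq hsum, ← hdim]
    have := natCard_ne_zero_complex (F := F)
    have := natCard_sub_one_ne_zero_complex (F := F)
    simp only [smul_eq_mul]
    field_simp
    ring
  · have hzero {s t s' t' : ℕ} (hs : s + s' = 1) (ht : t + t' = 1) :
        (raising x s t * raising x s' t') y z = 0 :=
      Finset.sum_eq_zero fun u _ => by
        by_contra hne
        obtain ⟨huy, hdu, hxu⟩ := of_lowering_apply_ne_zero (left_ne_zero_of_mul hne)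
        obtain ⟨hzu, hdz, hxz⟩ := of_lowering_apply_ne_zero (right_ne_zero_of_mul hne)
        exact h ⟨hzu.trans huy, by lia, by lia⟩
    rw [hzero rfl rfl, hzero rfl rfl, smul_zero]

/-- The commutator `[L₁, R₁]` or `[L₂, R₂]`. -/
noncomputable def loweringRaisingCommutator (x : Submodule F V) (s t : ℕ) :
    Matrix (Submodule F V) (Submodule F V) ℂ :=
  lowering x s t * raising x s t - raising x s t * lowering x s t

lemma lowering_mul_raising_add_apply_of_ne (x : Submodule F V) (hyz : y ≠ z) :
    (lowering x 1 0 * raising x 1 0 + lowering x 0 1 * raising x 0 1) y z =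
      (raising x 1 0 * lowering x 1 0 + raising x 0 1 * lowering x 0 1) y z := by
  rw [Matrix.add_apply, Matrix.add_apply, lowering_mul_raising_apply rfl rfl hyz,
    lowering_mul_raising_apply rfl rfl hyz, raising_mul_lowering_apply rfl rfl hyz,
    raising_mul_lowering_apply rfl rfl hyz]
  have hdim := Submodule.finrank_sup_add_finrank_inf_eq y z
  have hsub := finrank_inf_add_finrank_inf_le x y z
  have hysup := finrank_add_finrank_inf_le x (le_sup_left : y ≤ y ⊔ z)
  have hyinf' := finrank_inf_mono x (inf_le_left : y ⊓ z ≤ y)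
  have hysup' := finrank_inf_mono x (le_sup_left : y ≤ y ⊔ z)
  simp only [lowering, le_sup_left, le_sup_right, inf_le_left, inf_le_right, true_and,
    ite_zero_mul_ite_zero, mul_one]
  split_ifs <;> first | norm_num; done | (exfalso; lia)

end Matrices

section Casimir

open Matrix

lemma commute_mul_of_mul_eq_smul {k A : Type*} [Field k] [Ring A] [Algebra k A] {d t r : A} {c : k}
    (hc : c ≠ 0) (hdr : d * r = c • (r * d)) (hrt : r * t = c • (t * r)) : Commute (d * t) r := by
  refine smul_right_injective A hc ?_
  calc c • (d * t * r) = d * (c • (t * r)) := by rw [mul_smul_comm, mul_assoc]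
    _ = d * r * t := by rw [← hrt, mul_assoc]
    _ = c • (r * (d * t)) := by rw [hdr, smul_mul_assoc, mul_assoc]

variable {F V : Type*} [Field F] [AddCommGroup V] [Module F V] (x : Submodule F V)

/-- The diagonal matrix whose entry at `y ∈ P_{i,j}` is `φ i (i + j)`. -/
noncomputable def gradingDiagonal [DecidableEq (Submodule F V)] (φ : ℕ → ℕ → ℂ) :
    Matrix (Submodule F V) (Submodule F V) ℂ :=
  diagonal fun y => φ (finrank F ↥(x ⊓ y)) (finrank F y)

lemma isSymm_gradingDiagonal [DecidableEq (Submodule F V)] (φ : ℕ → ℕ → ℂ) :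
    (gradingDiagonal x φ).IsSymm :=
  diagonal_transpose _

variable [Fintype (Submodule F V)]

lemma isSymm_loweringRaisingCommutator (s t : ℕ) : (loweringRaisingCommutator x s t).IsSymm := by
  simp only [IsSymm, loweringRaisingCommutator, raising, transpose_sub, transpose_mul,
    transpose_transpose]

section Grading

variable [DecidableEq (Submodule F V)]

lemma gradingDiagonal_mul_raising (φ : ℕ → ℕ → ℂ) (s t : ℕ) :
    gradingDiagonal x φ * raising x s t =
      raising x s t * gradingDiagonal x fun i d => φ (i + s) (d + (s + t)) := by
  ext y z
  rw [gradingDiagonal, gradingDiagonal, diagonal_mul, mul_diagonal]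
  rcases eq_or_ne (lowering x s t z y) 0 with h | h
  · rw [raising, transpose_apply, h, mul_zero, zero_mul]
  · obtain ⟨-, hd, hi⟩ := of_lowering_apply_ne_zero h
    rw [hd, hi, mul_comm]

lemma lowering_mul_gradingDiagonal (φ : ℕ → ℕ → ℂ) (s t : ℕ) :
    lowering x s t * gradingDiagonal x φ =
      (gradingDiagonal x fun i d => φ (i + s) (d + (s + t))) * lowering x s t := by
  simpa only [raising, gradingDiagonal, transpose_mul, transpose_transpose, diagonal_transpose]
    using congrArg transpose (gradingDiagonal_mul_raising x φ s t)

lemma gradingDiagonal_mul_raising_of_forall {φ : ℕ → ℕ → ℂ} {s t : ℕ} {c : ℂ}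
    (h : ∀ i d, φ (i + s) (d + (s + t)) = c * φ i d) :
    gradingDiagonal x φ * raising x s t = c • (raising x s t * gradingDiagonal x φ) := by
  rw [gradingDiagonal_mul_raising, ← mul_smul_comm, gradingDiagonal, gradingDiagonal,
    ← diagonal_smul]
  simp only [h]
  rfl

lemma loweringRaisingCommutator_mul_gradingDiagonal (φ : ℕ → ℕ → ℂ) (s t : ℕ) :
    loweringRaisingCommutator x s t * gradingDiagonal x φ =
      gradingDiagonal x φ * loweringRaisingCommutator x s t := by
  have hup := gradingDiagonal_mul_raising x (fun i d => φ (i - s) (d - (s + t))) s t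
  have hdown := lowering_mul_gradingDiagonal x (fun i d => φ (i - s) (d - (s + t))) s t
  simp only [Nat.add_sub_cancel] at hup hdown
  calc loweringRaisingCommutator x s t * gradingDiagonal x φ
      = lowering x s t * (raising x s t * gradingDiagonal x φ) -
          raising x s t * (lowering x s t * gradingDiagonal x φ) := by
        rw [loweringRaisingCommutator, sub_mul, Matrix.mul_assoc, Matrix.mul_assoc]
    _ = gradingDiagonal x φ * lowering x s t * raising x s t -
          gradingDiagonal x φ * raising x s t * lowering x s t := by
        rw [← hup, ← Matrix.mul_assoc, hdown, lowering_mul_gradingDiagonal, ← Matrix.mul_assoc,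
          ← gradingDiagonal_mul_raising]
    _ = gradingDiagonal x φ * loweringRaisingCommutator x s t := by
        rw [loweringRaisingCommutator, mul_sub, Matrix.mul_assoc, Matrix.mul_assoc]

/-- The element `q^{i-j} (q-1) [L₁, R₁] + q^{2i}` of `H`, where `i` and `j` stand for the diagonal
matrices recording the cell `P_{i,j}`. It is central, and its eigenvalue tells the simple modules
with the same lower endpoint apart. -/
noncomputable def casimir : Matrix (Submodule F V) (Submodule F V) ℂ :=
  (gradingDiagonal x fun i d => (Nat.card F : ℂ) ^ (2 * i) / Nat.card F ^ d) *
      ((Nat.card F - 1 : ℂ) • loweringRaisingCommutator x 1 0) +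
    gradingDiagonal x fun i _ => (Nat.card F : ℂ) ^ (2 * i)

lemma commute_casimir_gradingDiagonal (φ : ℕ → ℕ → ℂ) :
    Commute (casimir x) (gradingDiagonal x φ) := by
  have hcomm (ψ : ℕ → ℕ → ℂ) : Commute (gradingDiagonal x ψ) (gradingDiagonal x φ) :=
    commute_diagonal _ _
  have hT : Commute (loweringRaisingCommutator x 1 0) (gradingDiagonal x φ) :=
    loweringRaisingCommutator_mul_gradingDiagonal x φ 1 0
  exact ((hcomm _).mul_left (hT.smul_left _)).add_left (hcomm _)

lemma isSymm_casimir : (casimir x).IsSymm := by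
  rw [IsSymm, casimir, transpose_add, transpose_mul, transpose_smul,
    isSymm_loweringRaisingCommutator, isSymm_gradingDiagonal, isSymm_gradingDiagonal,
    smul_mul_assoc, mul_smul_comm, loweringRaisingCommutator_mul_gradingDiagonal]

lemma commute_casimir_lowering {s t : ℕ} (h : Commute (casimir x) (raising x s t)) :
    Commute (casimir x) (lowering x s t) := by
  have := congrArg transpose h.eq
  rw [transpose_mul, transpose_mul, isSymm_casimir, raising, transpose_transpose] at this
  exact this.symm

end Grading

variable [FiniteDimensional F V]

lemma lowering_zero_one_mul_raising_one_zero :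
    lowering x 0 1 * raising x 1 0 = raising x 1 0 * lowering x 0 1 := by
  simpa only [raising, transpose_mul, transpose_transpose]
    using congrArg transpose (lowering_one_zero_mul_raising_zero_one x)

variable [Finite F]

lemma loweringRaisingCommutator_one_zero_mul_raising :
    loweringRaisingCommutator x 1 0 * raising x 0 1 =
      (Nat.card F : ℂ) • (raising x 0 1 * loweringRaisingCommutator x 1 0) := by
  have hLR := lowering_one_zero_mul_raising_zero_one x
  have hRR := raising_one_zero_mul_raising_zero_one x
  calc loweringRaisingCommutator x 1 0 * raising x 0 1
      = lowering x 1 0 * (raising x 1 0 * raising x 0 1) -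
          raising x 1 0 * (lowering x 1 0 * raising x 0 1) := by
        simp only [loweringRaisingCommutator, sub_mul, Matrix.mul_assoc]
    _ = (Nat.card F : ℂ) • (raising x 0 1 * lowering x 1 0 * raising x 1 0) -
          (Nat.card F : ℂ) • (raising x 0 1 * raising x 1 0) * lowering x 1 0 := by
        rw [hLR, hRR, Matrix.mul_smul, ← Matrix.mul_assoc, hLR, ← Matrix.mul_assoc, hRR]
    _ = (Nat.card F : ℂ) • (raising x 0 1 * loweringRaisingCommutator x 1 0) := by
        rw [loweringRaisingCommutator, mul_sub, smul_sub, Matrix.smul_mul, Matrix.mul_assoc,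
          Matrix.mul_assoc]

lemma raising_mul_loweringRaisingCommutator_zero_one :
    raising x 1 0 * loweringRaisingCommutator x 0 1 =
      (Nat.card F : ℂ) • (loweringRaisingCommutator x 0 1 * raising x 1 0) := by
  have hLR := lowering_zero_one_mul_raising_one_zero x
  have hRR := raising_one_zero_mul_raising_zero_one x
  calc raising x 1 0 * loweringRaisingCommutator x 0 1
      = raising x 1 0 * lowering x 0 1 * raising x 0 1 -
          raising x 1 0 * raising x 0 1 * lowering x 0 1 := by
        simp only [loweringRaisingCommutator, mul_sub, Matrix.mul_assoc]
    _ = lowering x 0 1 * (raising x 1 0 * raising x 0 1) -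
          (Nat.card F : ℂ) • (raising x 0 1 * (lowering x 0 1 * raising x 1 0)) := by
        rw [hRR, ← hLR, Matrix.smul_mul, Matrix.mul_assoc, Matrix.mul_assoc, hLR, hRR]
    _ = (Nat.card F : ℂ) • (loweringRaisingCommutator x 0 1 * raising x 1 0) := by
        rw [hRR, Matrix.mul_smul, ← smul_sub, loweringRaisingCommutator, sub_mul,
          Matrix.mul_assoc, Matrix.mul_assoc]

variable [DecidableEq (Submodule F V)]

lemma loweringRaisingCommutator_add :
    loweringRaisingCommutator x 1 0 + loweringRaisingCommutator x 0 1 =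
      gradingDiagonal x fun _ d =>
        (Nat.card F ^ finrank F V / Nat.card F ^ d - Nat.card F ^ d) / (Nat.card F - 1) := by
  rw [loweringRaisingCommutator, loweringRaisingCommutator, sub_add_sub_comm]
  ext y z
  rw [Matrix.sub_apply, gradingDiagonal]
  rcases eq_or_ne y z with rfl | hyz
  · have hup : (lowering x 1 0 * raising x 1 0 + lowering x 0 1 * raising x 0 1) y y =
        ({u | y ⋖ u ∧ u ≤ ⊤}.ncard : ℂ) := by
      classical
      rw [← sum_ite_one_zero_eq_ncard, Matrix.add_apply, Matrix.mul_apply, Matrix.mul_apply,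
        ← Finset.sum_add_distrib]
      refine Finset.sum_congr rfl fun u _ => ?_
      have hle (hyu : y ≤ u) := finrank_inf_mono x hyu
      have hle' (hyu : y ≤ u) := finrank_add_finrank_inf_le x hyu
      simp only [raising, transpose_apply, lowering, ite_zero_mul_ite_zero, mul_one,
        covBy_iff_finrank, le_top, and_true, and_self]
      split_ifs <;> first | norm_num; done | (exfalso; lia)
    have hdown : (raising x 1 0 * lowering x 1 0 + raising x 0 1 * lowering x 0 1) y y =
        ({u | ⊥ ≤ u ∧ u ⋖ y}.ncard : ℂ) := by
      classical
      rw [← sum_ite_one_zero_eq_ncard, Matrix.add_apply, Matrix.mul_apply, Matrix.mul_apply,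
        ← Finset.sum_add_distrib]
      refine Finset.sum_congr rfl fun u _ => ?_
      have hle (huy : u ≤ y) := finrank_inf_mono x huy
      have hle' (huy : u ≤ y) := finrank_add_finrank_inf_le x huy
      simp only [raising, transpose_apply, lowering, ite_zero_mul_ite_zero, mul_one,
        covBy_iff_finrank, bot_le, true_and, and_self]
      split_ifs <;> first | norm_num; done | (exfalso; lia)
    rw [hup, hdown, ncard_covers le_top, ncard_cocovers bot_le, finrank_top, finrank_bot,
      diagonal_apply_eq]
    ring
  · rw [lowering_mul_raising_add_apply_of_ne x hyz, sub_self, diagonal_apply_ne _ hyz]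

lemma casimir_eq_sub :
    casimir x =
      (gradingDiagonal x fun i d =>
          (Nat.card F : ℂ) ^ (finrank F V + 2 * i) / Nat.card F ^ (2 * d)) -
        (gradingDiagonal x fun i d => (Nat.card F : ℂ) ^ (2 * i) / Nat.card F ^ d) *
          ((Nat.card F - 1 : ℂ) • loweringRaisingCommutator x 0 1) := by
  rw [casimir, eq_sub_iff_add_eq, add_right_comm, ← Matrix.mul_add, ← smul_add,
    loweringRaisingCommutator_add]
  simp only [gradingDiagonal, ← diagonal_smul, diagonal_mul_diagonal, diagonal_add]
  congr 1
  ext y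
  have := natCard_ne_zero_complex (F := F)
  have := natCard_sub_one_ne_zero_complex (F := F)
  simp only [Pi.smul_apply, smul_eq_mul]
  field_simp
  ring

lemma commute_casimir_raising_one_zero : Commute (casimir x) (raising x 1 0) := by
  have hq := natCard_ne_zero_complex (F := F)
  have hscalar := gradingDiagonal_mul_raising_of_forall x (s := 1) (t := 0) (c := 1)
    (φ := fun i d => (Nat.card F : ℂ) ^ (finrank F V + 2 * i) / Nat.card F ^ (2 * d))
    fun i d => by field_simp; ring
  have hweight := gradingDiagonal_mul_raising_of_forall x (s := 1) (t := 0) (c := Nat.card F)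
    (φ := fun i d => (Nat.card F : ℂ) ^ (2 * i) / Nat.card F ^ d) fun i d => by field_simp; ring
  rw [one_smul] at hscalar
  rw [casimir_eq_sub]
  refine Commute.sub_left hscalar (commute_mul_of_mul_eq_smul hq hweight ?_)
  rw [mul_smul_comm, raising_mul_loweringRaisingCommutator_zero_one, smul_mul_assoc, smul_comm]

lemma commute_casimir_raising_zero_one : Commute (casimir x) (raising x 0 1) := by
  have hq := natCard_ne_zero_complex (F := F)
  have hscalar := gradingDiagonal_mul_raising_of_forall x (s := 0) (t := 1) (c := 1)
    (φ := fun i _ => (Nat.card F : ℂ) ^ (2 * i)) fun i _ => by simp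
  have hweight := gradingDiagonal_mul_raising_of_forall x (s := 0) (t := 1)
    (c := (Nat.card F : ℂ)⁻¹) (φ := fun i d => (Nat.card F : ℂ) ^ (2 * i) / Nat.card F ^ d)
    fun i d => by simp only [Nat.add_zero]; field_simp; ring
  rw [one_smul] at hscalar
  refine Commute.add_left (commute_mul_of_mul_eq_smul (inv_ne_zero hq) hweight ?_) hscalar
  rw [smul_mul_assoc, loweringRaisingCommutator_one_zero_mul_raising, mul_smul_comm,
    smul_comm (Nat.card F - 1 : ℂ), inv_smul_smul₀ hq]

end Casimir

section Chain

variable {k E : Type*} [Field k] [AddCommGroup E] [Module k E] {A B : Module.End k E} {v : E}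

lemma apply_pow_succ_apply_eq_sum_smul {t : ℕ → k} (hA : A v = 0)
    (ht : ∀ m, (A * B - B * A) ((B ^ m) v) = t m • (B ^ m) v) (m : ℕ) :
    A ((B ^ (m + 1)) v) = (∑ l ∈ Finset.range (m + 1), t l) • (B ^ m) v := by
  have hcomm (m : ℕ) : A ((B ^ (m + 1)) v) = t m • (B ^ m) v + B (A ((B ^ m) v)) := by
    rw [← ht m, pow_succ']
    simp
  induction m with
  | zero => rw [hcomm, pow_zero, Module.End.one_apply, hA]; simp
  | succ m ih =>
    rw [hcomm, ih, map_smul, ← Module.End.mul_apply B, ← pow_succ', ← add_smul,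
      Finset.sum_range_succ _ (m + 1), add_comm]

/-- The weights of a chain for a quantum `sl₂`-triple: such a chain can only end where the
geometric sum of the commutators vanishes. -/
lemma exists_pow_apply_ne_zero_of_commutator {κ β γ N : k} (hκ : κ ≠ 0) (hN : N ≠ 0)
    (hN' : ∀ m, N ^ (m + 1) ≠ 1) (hA : A v = 0)
    (ht : ∀ m, (A * B - B * A) ((B ^ m) v) = (κ * (β / N ^ m - γ * N ^ m)) • (B ^ m) v)
    (hv : v ≠ 0) (hB : ∃ n, (B ^ n) v = 0) :
    ∃ n, (B ^ n) v ≠ 0 ∧ β = γ * N ^ n := by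
  classical
  obtain ⟨n, hn⟩ : ∃ n, Nat.find hB = n + 1 := Nat.exists_eq_succ_of_ne_zero fun h0 =>
    hv (by simpa [h0] using Nat.find_spec hB)
  have hn0 : (B ^ n) v ≠ 0 := Nat.find_min hB (by lia)
  have hsum := apply_pow_succ_apply_eq_sum_smul hA ht n
  rw [← hn, Nat.find_spec hB, map_zero, eq_comm, smul_eq_zero_iff_left hn0] at hsum
  have hgeom (m : ℕ) : (∑ l ∈ Finset.range m, κ * (β / N ^ l - γ * N ^ l)) * ((N - 1) * N ^ m) =
      κ * (N ^ m - 1) * (β * N - γ * N ^ m) := by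
    induction m with
    | zero => simp
    | succ m ih =>
      rw [Finset.sum_range_succ, add_mul, pow_succ, ← mul_assoc (N - 1), ← mul_assoc, ih]
      field_simp
      ring
  have hzero := hgeom (n + 1)
  rw [← hn, hsum, zero_mul, hn, eq_comm,
    mul_eq_zero_iff_left (mul_ne_zero hκ (sub_ne_zero.2 (hN' n)))] at hzero
  exact ⟨n, hn0, mul_right_cancel₀ hN (by linear_combination hzero)⟩

end Chain

section GradedPart

open Matrix

variable {F V : Type*} [Field F] [AddCommGroup V] [Module F V] (x : Submodule F V)

/-- The functions supported on the cell `P_{i,j}`, that is, the image of `E*_{i,j}`. -/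
def gradedPart (i j : ℕ) : Submodule ℂ (Submodule F V → ℂ) where
  carrier := {f | ∀ y, f y ≠ 0 → finrank F ↥(x ⊓ y) = i ∧ finrank F y = i + j}
  zero_mem' := fun _ h => (h rfl).elim
  add_mem' := fun {f g} hf hg y h => by
    by_cases hfy : f y = 0
    · exact hg y fun hgy => h (by rw [Pi.add_apply, hfy, hgy, add_zero])
    · exact hf y hfy
  smul_mem' := fun c f hf y h => hf y fun hfy => h (by rw [Pi.smul_apply, hfy, smul_zero])

variable {x} {s t i j : ℕ} {f : Submodule F V → ℂ}

lemma gradingDiagonal_mulVec [Fintype (Submodule F V)] [DecidableEq (Submodule F V)]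
    (φ : ℕ → ℕ → ℂ) (hf : f ∈ gradedPart x i j) :
    gradingDiagonal x φ *ᵥ f = φ i (i + j) • f := by
  ext y
  rw [gradingDiagonal, mulVec_diagonal, Pi.smul_apply, smul_eq_mul]
  by_cases hfy : f y = 0
  · rw [hfy, mul_zero, mul_zero]
  · obtain ⟨hi, hd⟩ := hf y hfy
    rw [hi, hd]

section

variable [Fintype (Submodule F V)]

lemma raising_mulVec_mem (hf : f ∈ gradedPart x i j) :
    raising x s t *ᵥ f ∈ gradedPart x (i + s) (j + t) := by
  intro y hy
  obtain ⟨z, -, hz⟩ := Finset.exists_ne_zero_of_sum_ne_zero hy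
  obtain ⟨-, hd, hi⟩ := of_lowering_apply_ne_zero (left_ne_zero_of_mul hz)
  obtain ⟨hzi, hzd⟩ := hf z (right_ne_zero_of_mul hz)
  lia

lemma raising_pow_apply_mem (hf : f ∈ gradedPart x i j) (m : ℕ) :
    ((raising x s t).mulVecLin ^ m) f ∈ gradedPart x (i + s * m) (j + t * m) := by
  induction m with
  | zero => exact hf
  | succ m ih =>
    rw [pow_succ', mul_add_one, mul_add_one, ← add_assoc, ← add_assoc]
    exact raising_mulVec_mem ih

lemma lowering_mulVec_mem (hf : f ∈ gradedPart x (i + s) (j + t)) :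
    lowering x s t *ᵥ f ∈ gradedPart x i j := by
  intro y hy
  obtain ⟨z, -, hz⟩ := Finset.exists_ne_zero_of_sum_ne_zero hy
  obtain ⟨-, hd, hi⟩ := of_lowering_apply_ne_zero (left_ne_zero_of_mul hz)
  obtain ⟨hzi, hzd⟩ := hf z (right_ne_zero_of_mul hz)
  lia

lemma lowering_pow_apply_mem {m : ℕ} (hf : f ∈ gradedPart x (i + s * m) (j + t * m)) :
    ((lowering x s t).mulVecLin ^ m) f ∈ gradedPart x i j := by
  induction m generalizing f with
  | zero => exact hf
  | succ m ih =>
    rw [mul_add_one, mul_add_one, ← add_assoc, ← add_assoc] at hf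
    exact ih (lowering_mulVec_mem hf)

variable [FiniteDimensional F V]

lemma lowering_mulVec_eq_zero (hf : f ∈ gradedPart x i j) (h : i < s ∨ j < t) :
    lowering x s t *ᵥ f = 0 := by
  ext y
  by_contra hy
  obtain ⟨z, -, hz⟩ := Finset.exists_ne_zero_of_sum_ne_zero hy
  obtain ⟨-, hd, hi⟩ := of_lowering_apply_ne_zero (left_ne_zero_of_mul hz)
  obtain ⟨hzi, hzd⟩ := hf z (right_ne_zero_of_mul hz)
  have := Submodule.finrank_mono (inf_le_right : x ⊓ y ≤ y)
  lia

lemma lowering_one_zero_pow_apply_eq_zero {m : ℕ} (hf : f ∈ gradedPart x i j) (h : i < m) :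
    ((lowering x 1 0).mulVecLin ^ m) f = 0 := by
  refine Module.End.pow_map_zero_of_le h ?_
  have hbot := lowering_pow_apply_mem (x := x) (s := 1) (t := 0) (i := 0) (j := j) (m := i) (f := f)
    (by simpa using hf)
  rw [pow_succ', Module.End.mul_apply]
  exact lowering_mulVec_eq_zero hbot (Or.inl zero_lt_one)

end

lemma le_of_mem_gradedPart [FiniteDimensional F V] (hf : f ∈ gradedPart x i j) (h : f ≠ 0) :
    i ≤ finrank F x ∧ j + finrank F x ≤ finrank F V := by
  obtain ⟨y, hy⟩ := Function.ne_iff.1 h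
  obtain ⟨hi, hd⟩ := hf y hy
  have := Submodule.finrank_mono (inf_le_left : x ⊓ y ≤ x)
  have := finrank_add_finrank_inf_le x (le_top : y ≤ ⊤)
  rw [inf_top_eq, finrank_top] at this
  lia

variable [Finite F] [Fintype (Submodule F V)] [DecidableEq (Submodule F V)] {β : ℂ}

lemma casimir_mulVec_eq_smul_iff (hf : f ∈ gradedPart x i j) :
    casimir x *ᵥ f = β • f ↔ loweringRaisingCommutator x 1 0 *ᵥ f =
      (Nat.card F ^ j / (Nat.card F - 1) * (β / Nat.card F ^ i - Nat.card F ^ i)) • f := by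
  have hq := natCard_ne_zero_complex (F := F)
  have hq1 := natCard_sub_one_ne_zero_complex (F := F)
  have hcasimir : casimir x *ᵥ f =
      ((Nat.card F ^ i * (Nat.card F - 1) / Nat.card F ^ j : ℂ)) •
        loweringRaisingCommutator x 1 0 *ᵥ f + ((Nat.card F : ℂ) ^ (2 * i)) • f := by
    rw [casimir, add_mulVec, gradingDiagonal_mulVec _ hf, mul_smul_comm, smul_mulVec,
      ← loweringRaisingCommutator_mul_gradingDiagonal, ← mulVec_mulVec,
      gradingDiagonal_mulVec _ hf, mulVec_smul, smul_smul]
    congr 2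
    field_simp
    ring
  rw [hcasimir, ← eq_sub_iff_add_eq, ← sub_smul, ← eq_inv_smul_iff₀, smul_smul]
  · congr! 2
    field_simp
    ring
  · positivity

lemma loweringRaisingCommutator_zero_one_mulVec [FiniteDimensional F V]
    (hf : f ∈ gradedPart x i j)
    (h : casimir x *ᵥ f = β • f) :
    loweringRaisingCommutator x 0 1 *ᵥ f =
      ((Nat.card F ^ finrank F V / Nat.card F ^ j - β * Nat.card F ^ j) /
        (Nat.card F ^ i * (Nat.card F - 1))) • f := by
  have hq := natCard_ne_zero_complex (F := F)
  have hq1 := natCard_sub_one_ne_zero_complex (F := F)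
  have hsum := congrArg (· *ᵥ f) (loweringRaisingCommutator_add x)
  simp only [add_mulVec, (casimir_mulVec_eq_smul_iff hf).1 h, gradingDiagonal_mulVec _ hf] at hsum
  rw [eq_sub_of_add_eq' hsum, ← sub_smul]
  congr 1
  field_simp
  ring

end GradedPart

section CasimirEigenvectors

open Matrix

lemma natCard_pow_injective {F : Type*} [Field F] [Finite F] :
    Function.Injective fun n : ℕ => (Nat.card F : ℂ) ^ n := fun m n h =>
  Nat.pow_right_injective (Finite.one_lt_card (α := F)) <|
    Nat.cast_injective (R := ℂ) (by simpa only [Nat.cast_pow] using h)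

lemma natCard_pow_succ_ne_one {F : Type*} [Field F] [Finite F] (m : ℕ) :
    (Nat.card F : ℂ) ^ (m + 1) ≠ 1 := fun h =>
  m.succ_ne_zero (natCard_pow_injective (F := F) (h.trans (pow_zero _).symm))

variable {F V : Type*} [Field F] [AddCommGroup V] [Module F V] {x : Submodule F V}
  [Fintype (Submodule F V)] {i j : ℕ} {β : ℂ} {f : Submodule F V → ℂ}

lemma loweringRaisingCommutator_mulVec (s t : ℕ) (f : Submodule F V → ℂ) :
    loweringRaisingCommutator x s t *ᵥ f =
      ((lowering x s t).mulVecLin * (raising x s t).mulVecLin -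
        (raising x s t).mulVecLin * (lowering x s t).mulVecLin) f := by
  rw [loweringRaisingCommutator, sub_mulVec, ← mulVec_mulVec, ← mulVec_mulVec]
  rfl

variable [DecidableEq (Submodule F V)]

lemma casimir_mulVec_pow_apply {M : Matrix (Submodule F V) (Submodule F V) ℂ}
    (hM : Commute (casimir x) M) (h : casimir x *ᵥ f = β • f) (m : ℕ) :
    casimir x *ᵥ (M.mulVecLin ^ m) f = β • (M.mulVecLin ^ m) f := by
  induction m with
  | zero => exact h
  | succ m ih =>
    rw [pow_succ', Module.End.mul_apply, mulVecLin_apply, mulVec_mulVec, hM.eq, ← mulVec_mulVec,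
      ih, mulVec_smul]

variable [Finite F] [FiniteDimensional F V]

lemma commutator_raising_one_zero_pow_apply (hf : f ∈ gradedPart x i j)
    (h : casimir x *ᵥ f = β • f) (m : ℕ) :
    ((lowering x 1 0).mulVecLin * (raising x 1 0).mulVecLin -
        (raising x 1 0).mulVecLin * (lowering x 1 0).mulVecLin)
        (((raising x 1 0).mulVecLin ^ m) f) =
      (Nat.card F ^ j / (Nat.card F ^ i * (Nat.card F - 1)) *
        (β / Nat.card F ^ m - Nat.card F ^ (2 * i) * Nat.card F ^ m) : ℂ) •
        ((raising x 1 0).mulVecLin ^ m) f := by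
  have hq := natCard_ne_zero_complex (F := F)
  have hq1 := natCard_sub_one_ne_zero_complex (F := F)
  rw [← loweringRaisingCommutator_mulVec,
    (casimir_mulVec_eq_smul_iff (raising_pow_apply_mem (s := 1) (t := 0) hf m)).1
      (casimir_mulVec_pow_apply (commute_casimir_raising_one_zero x) h m), one_mul, zero_mul,
    add_zero]
  congr 1
  field_simp
  ring

lemma commutator_raising_zero_one_pow_apply (hf : f ∈ gradedPart x i j)
    (h : casimir x *ᵥ f = β • f) (m : ℕ) :
    ((lowering x 0 1).mulVecLin * (raising x 0 1).mulVecLin -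
        (raising x 0 1).mulVecLin * (lowering x 0 1).mulVecLin)
        (((raising x 0 1).mulVecLin ^ m) f) =
      (Nat.card F ^ j / (Nat.card F ^ i * (Nat.card F - 1)) *
        (Nat.card F ^ finrank F V / Nat.card F ^ (2 * j) / Nat.card F ^ m -
          β * Nat.card F ^ m) : ℂ) • ((raising x 0 1).mulVecLin ^ m) f := by
  have hq := natCard_ne_zero_complex (F := F)
  have hq1 := natCard_sub_one_ne_zero_complex (F := F)
  rw [← loweringRaisingCommutator_mulVec,
    loweringRaisingCommutator_zero_one_mulVec (raising_pow_apply_mem (s := 0) (t := 1) hf m)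
      (casimir_mulVec_pow_apply (commute_casimir_raising_zero_one x) h m), one_mul, zero_mul,
    add_zero]
  congr 1
  field_simp
  ring

lemma commutator_lowering_one_zero_pow_apply (hf : f ∈ gradedPart x i j)
    (h : casimir x *ᵥ f = β • f) (m : ℕ) :
    ((raising x 1 0).mulVecLin * (lowering x 1 0).mulVecLin -
        (lowering x 1 0).mulVecLin * (raising x 1 0).mulVecLin)
        (((lowering x 1 0).mulVecLin ^ m) f) =
      (Nat.card F ^ j / (Nat.card F ^ i * (Nat.card F - 1)) *
        (Nat.card F ^ (2 * i) / Nat.card F ^ m - β * Nat.card F ^ m) : ℂ) •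
        ((lowering x 1 0).mulVecLin ^ m) f := by
  have hq := natCard_ne_zero_complex (F := F)
  have hq1 := natCard_sub_one_ne_zero_complex (F := F)
  rcases lt_or_ge i m with hm | hm
  · rw [lowering_one_zero_pow_apply_eq_zero hf hm, map_zero, smul_zero]
  obtain ⟨i, rfl⟩ := Nat.exists_eq_add_of_le' hm
  have hmem : ((lowering x 1 0).mulVecLin ^ m) f ∈ gradedPart x i j :=
    lowering_pow_apply_mem (by simpa using hf)
  rw [← neg_sub, LinearMap.neg_apply, ← loweringRaisingCommutator_mulVec,
    (casimir_mulVec_eq_smul_iff hmem).1 (casimir_mulVec_pow_apply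
      (commute_casimir_lowering x (commute_casimir_raising_one_zero x)) h m), ← neg_smul]
  congr 1
  field_simp
  ring

lemma exists_raising_one_zero_pow_ne_zero (hf : f ∈ gradedPart x i j) (hf0 : f ≠ 0)
    (h : casimir x *ᵥ f = β • f) (hL : lowering x 1 0 *ᵥ f = 0) :
    ∃ k, ((raising x 1 0).mulVecLin ^ k) f ≠ 0 ∧ β = Nat.card F ^ (2 * i) * Nat.card F ^ k := by
  have hq := natCard_ne_zero_complex (F := F)
  have hq1 := natCard_sub_one_ne_zero_complex (F := F)
  refine exists_pow_apply_ne_zero_of_commutator (by positivity) hq natCard_pow_succ_ne_one hL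
    (commutator_raising_one_zero_pow_apply hf h) hf0 ⟨finrank F x + 1, ?_⟩
  by_contra hne
  have := (le_of_mem_gradedPart (raising_pow_apply_mem hf _) hne).1
  lia

lemma exists_lowering_one_zero_pow_ne_zero (hf : f ∈ gradedPart x i j) (hf0 : f ≠ 0)
    (h : casimir x *ᵥ f = β • f) (hR : raising x 1 0 *ᵥ f = 0) :
    ∃ k, ((lowering x 1 0).mulVecLin ^ k) f ≠ 0 ∧
      (Nat.card F : ℂ) ^ (2 * i) = β * Nat.card F ^ k := by
  have hq := natCard_ne_zero_complex (F := F)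
  have hq1 := natCard_sub_one_ne_zero_complex (F := F)
  exact exists_pow_apply_ne_zero_of_commutator (by positivity) hq natCard_pow_succ_ne_one hR
    (commutator_lowering_one_zero_pow_apply hf h) hf0
    ⟨i + 1, lowering_one_zero_pow_apply_eq_zero hf i.lt_succ_self⟩

lemma exists_raising_zero_one_pow_ne_zero (hf : f ∈ gradedPart x i j) (hf0 : f ≠ 0)
    (h : casimir x *ᵥ f = β • f) (hL : lowering x 0 1 *ᵥ f = 0) :
    ∃ k, ((raising x 0 1).mulVecLin ^ k) f ≠ 0 ∧
      (Nat.card F : ℂ) ^ finrank F V / Nat.card F ^ (2 * j) = β * Nat.card F ^ k := by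
  have hq := natCard_ne_zero_complex (F := F)
  have hq1 := natCard_sub_one_ne_zero_complex (F := F)
  refine exists_pow_apply_ne_zero_of_commutator (by positivity) hq natCard_pow_succ_ne_one hL
    (commutator_raising_zero_one_pow_apply hf h) hf0 ⟨finrank F V + 1, ?_⟩
  by_contra hne
  have := (le_of_mem_gradedPart (raising_pow_apply_mem hf _) hne).2
  lia

end CasimirEigenvectors

section LowestWeight

open Matrix

variable {F V : Type*} [Field F] [AddCommGroup V] [Module F V] {x : Submodule F V}
  [Fintype (Submodule F V)] {i j : ℕ} {β : ℂ} {f w : Submodule F V → ℂ}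

/-- The span of the vectors `R₂ⁿ R₁ᵐ w`; when `w` is a Casimir eigenvector killed by `L₁` and `L₂`
it contains the submodule generated by `w`. -/
def raisingSpan (x : Submodule F V) (w : Submodule F V → ℂ) :
    Submodule ℂ (Submodule F V → ℂ) :=
  Submodule.span ℂ (Set.range fun p : ℕ × ℕ =>
    ((raising x 0 1).mulVecLin ^ p.2) (((raising x 1 0).mulVecLin ^ p.1) w))

lemma raising_pow_apply_mem_raisingSpan (m n : ℕ) :
    ((raising x 0 1).mulVecLin ^ n) (((raising x 1 0).mulVecLin ^ m) w) ∈ raisingSpan x w :=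
  Submodule.subset_span ⟨(m, n), rfl⟩

lemma apply_mem_of_mem_raisingSpan {E : Type*} [AddCommGroup E] [Module ℂ E] {U : Submodule ℂ E}
    (A : (Submodule F V → ℂ) →ₗ[ℂ] E)
    (hA : ∀ m n, A (((raising x 0 1).mulVecLin ^ n) (((raising x 1 0).mulVecLin ^ m) w)) ∈ U)
    (hf : f ∈ raisingSpan x w) : A f ∈ U := by
  suffices raisingSpan x w ≤ U.comap A from this hf
  refine Submodule.span_le.2 ?_
  rintro - ⟨⟨m, n⟩, rfl⟩
  exact hA m n

lemma raising_pow_apply_mem_gradedPart (hw : w ∈ gradedPart x i j) (m n : ℕ) :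
    ((raising x 0 1).mulVecLin ^ n) (((raising x 1 0).mulVecLin ^ m) w) ∈
      gradedPart x (i + m) (j + n) := by
  simpa using raising_pow_apply_mem (s := 0) (t := 1)
    (raising_pow_apply_mem (s := 1) (t := 0) hw m) n

lemma raising_zero_one_mulVec_mem_raisingSpan (hf : f ∈ raisingSpan x w) :
    raising x 0 1 *ᵥ f ∈ raisingSpan x w :=
  apply_mem_of_mem_raisingSpan (raising x 0 1).mulVecLin (fun m n => by
    rw [← Module.End.mul_apply, ← pow_succ']
    exact raising_pow_apply_mem_raisingSpan m (n + 1)) hf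

lemma commute_mulVecLin {M N : Matrix (Submodule F V) (Submodule F V) ℂ} (h : M * N = N * M) :
    Commute M.mulVecLin N.mulVecLin := by
  rw [Commute, SemiconjBy, Module.End.mul_eq_comp, Module.End.mul_eq_comp, ← mulVecLin_mul,
    ← mulVecLin_mul, h]

variable [Finite F] [FiniteDimensional F V]

lemma raising_one_zero_mulVec_mem_raisingSpan (hf : f ∈ raisingSpan x w) :
    raising x 1 0 *ᵥ f ∈ raisingSpan x w := by
  have hswap (f : Submodule F V → ℂ) (n : ℕ) :
      (raising x 1 0).mulVecLin (((raising x 0 1).mulVecLin ^ n) f) =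
        ((Nat.card F : ℂ) ^ n) •
          ((raising x 0 1).mulVecLin ^ n) ((raising x 1 0).mulVecLin f) := by
    induction n generalizing f with
    | zero => simp
    | succ n ih =>
      rw [pow_succ, Module.End.mul_apply, Module.End.mul_apply, ih, pow_succ, mul_smul,
        mulVecLin_apply (raising x 1 0), mulVecLin_apply (raising x 0 1), mulVec_mulVec,
        raising_one_zero_mul_raising_zero_one, smul_mulVec, map_smul, ← mulVec_mulVec]
      rfl
  refine apply_mem_of_mem_raisingSpan (raising x 1 0).mulVecLin (fun m n => ?_) hf
  rw [hswap, ← Module.End.mul_apply (raising x 1 0).mulVecLin, ← pow_succ']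
  exact Submodule.smul_mem _ _ (raising_pow_apply_mem_raisingSpan (m + 1) n)

variable [DecidableEq (Submodule F V)]

lemma lowering_one_zero_mulVec_mem_raisingSpan (hw : w ∈ gradedPart x i j)
    (hβ : casimir x *ᵥ w = β • w) (hL₁ : lowering x 1 0 *ᵥ w = 0) (hf : f ∈ raisingSpan x w) :
    lowering x 1 0 *ᵥ f ∈ raisingSpan x w := by
  have hcomm := commute_mulVecLin (lowering_one_zero_mul_raising_zero_one x)
  refine apply_mem_of_mem_raisingSpan (lowering x 1 0).mulVecLin (fun m n => ?_) hf
  rw [← Module.End.mul_apply, (hcomm.pow_right n).eq, Module.End.mul_apply]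
  cases m with
  | zero =>
    rw [pow_zero, Module.End.one_apply, mulVecLin_apply, hL₁, map_zero]
    exact Submodule.zero_mem _
  | succ m =>
    rw [apply_pow_succ_apply_eq_sum_smul hL₁ (commutator_raising_one_zero_pow_apply hw hβ),
      map_smul]
    exact Submodule.smul_mem _ _ (raising_pow_apply_mem_raisingSpan m n)

lemma lowering_zero_one_mulVec_mem_raisingSpan (hw : w ∈ gradedPart x i j)
    (hβ : casimir x *ᵥ w = β • w) (hL₂ : lowering x 0 1 *ᵥ w = 0) (hf : f ∈ raisingSpan x w) :
    lowering x 0 1 *ᵥ f ∈ raisingSpan x w := by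
  have hcomm := commute_mulVecLin (lowering_zero_one_mul_raising_one_zero x)
  refine apply_mem_of_mem_raisingSpan (lowering x 0 1).mulVecLin (fun m n => ?_) hf
  have hkill : (lowering x 0 1).mulVecLin (((raising x 1 0).mulVecLin ^ m) w) = 0 := by
    rw [← Module.End.mul_apply, (hcomm.pow_right m).eq, Module.End.mul_apply, mulVecLin_apply,
      hL₂, map_zero]
  cases n with
  | zero =>
    rw [pow_zero, Module.End.one_apply, hkill]
    exact Submodule.zero_mem _
  | succ n =>
    rw [apply_pow_succ_apply_eq_sum_smul hkill
      (commutator_raising_zero_one_pow_apply (raising_pow_apply_mem hw m)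
        (casimir_mulVec_pow_apply (commute_casimir_raising_one_zero x) hβ m))]
    exact Submodule.smul_mem _ _ (raising_pow_apply_mem_raisingSpan m n)

end LowestWeight

section Perron

open Matrix ComplexOrder

lemma exists_forall_norm_le_mul_norm {ι : Type*} [Finite ι] {f g : ι → ℂ}
    (hfg : ∀ y, f y ≠ 0 → g y ≠ 0) (hf : f ≠ 0) :
    ∃ y₀, f y₀ ≠ 0 ∧ ∀ z, ‖f z‖ ≤ ‖f y₀‖ / ‖g y₀‖ * ‖g z‖ := by
  classical
  cases nonempty_fintype ι
  obtain ⟨y, hy⟩ := Function.ne_iff.1 hf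
  obtain ⟨y₀, hy₀, hle⟩ := Finset.exists_max_image {y | f y ≠ 0} (fun y => ‖f y‖ / ‖g y‖)
    ⟨y, (Finset.mem_filter_univ y).2 hy⟩
  rw [Finset.mem_filter_univ] at hy₀
  refine ⟨y₀, hy₀, fun z => ?_⟩
  by_cases hz : f z = 0
  · rw [hz, norm_zero]
    positivity
  · exact (div_le_iff₀ (norm_pos_iff.2 (hfg z hz))).1 (hle z ((Finset.mem_filter_univ z).2 hz))

/-- The Perron-Frobenius comparison: dominate `f` by the least possible multiple of `g`, and read
off the eigenvalue equation of `f` where the two touch. -/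
lemma re_eigenvalue_le_of_offDiag_nonneg {ι : Type*} [Fintype ι] {M : Matrix ι ι ℂ}
    (hM : ∀ y z, y ≠ z → 0 ≤ M y z) {f g : ι → ℂ} {s t : ℂ} (hg : 0 ≤ g)
    (hfg : ∀ y, f y ≠ 0 → g y ≠ 0) (hf : f ≠ 0) (hMf : M *ᵥ f = t • f) (hMg : M *ᵥ g = s • g) :
    t.re ≤ s.re := by
  classical
  obtain ⟨y₀, hy₀, hmax⟩ := exists_forall_norm_le_mul_norm hfg hf
  have hgy₀ : 0 < ‖g y₀‖ := norm_pos_iff.2 (hfg y₀ hy₀)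
  have hoff {h : ι → ℂ} {r : ℂ} (hh : M *ᵥ h = r • h) :
      (r - M y₀ y₀) * h y₀ = ∑ z ∈ Finset.univ.erase y₀, M y₀ z * h z := by
    have := congrFun hh y₀
    rw [mulVec, dotProduct, ← Finset.add_sum_erase _ _ (Finset.mem_univ y₀)] at this
    rw [sub_mul, ← smul_eq_mul r, ← Pi.smul_apply, ← this, add_sub_cancel_left]
  have hsg : (s - M y₀ y₀).re * ‖g y₀‖ = ∑ z ∈ Finset.univ.erase y₀, ‖M y₀ z‖ * ‖g z‖ := by
    have := congrArg Complex.re (hoff hMg)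
    rw [Complex.eq_coe_norm_of_nonneg (hg y₀), Complex.re_mul_ofReal, Complex.re_sum] at this
    rw [this]
    refine Finset.sum_congr rfl fun z hz => ?_
    rw [← norm_mul, Complex.re_eq_norm]
    exact mul_nonneg (hM _ _ (Finset.ne_of_mem_erase hz).symm) (hg z)
  have htf : ‖t - M y₀ y₀‖ * ‖f y₀‖ ≤ (s - M y₀ y₀).re * ‖f y₀‖ :=
    calc ‖t - M y₀ y₀‖ * ‖f y₀‖ = ‖∑ z ∈ Finset.univ.erase y₀, M y₀ z * f z‖ := by
          rw [← norm_mul, hoff hMf]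
      _ ≤ ∑ z ∈ Finset.univ.erase y₀, ‖M y₀ z‖ * (‖f y₀‖ / ‖g y₀‖ * ‖g z‖) :=
          norm_sum_le_of_le _ fun z _ => by
            rw [norm_mul]
            exact mul_le_mul_of_nonneg_left (hmax z) (norm_nonneg _)
      _ = ‖f y₀‖ / ‖g y₀‖ * ((s - M y₀ y₀).re * ‖g y₀‖) := by
          rw [hsg, Finset.mul_sum]
          exact Finset.sum_congr rfl fun z _ => by ring
      _ = (s - M y₀ y₀).re * ‖f y₀‖ := by field_simp
  have hle := (Complex.re_le_norm _).trans (le_of_mul_le_mul_right htf (norm_pos_iff.2 hy₀))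
  rwa [Complex.sub_re, Complex.sub_re, sub_le_sub_iff_right] at hle

variable {F V : Type*} [Field F] [AddCommGroup V] [Module F V] {x : Submodule F V}

lemma lowering_nonneg (s t : ℕ) (y z : Submodule F V) : 0 ≤ lowering x s t y z := by
  rw [lowering]
  split_ifs <;> norm_num

lemma raising_mulVec_nonneg [Fintype (Submodule F V)] {g : Submodule F V → ℂ} (hg : 0 ≤ g)
    (s t : ℕ) :
    0 ≤ raising x s t *ᵥ g := fun y =>
  Finset.sum_nonneg fun z _ => mul_nonneg (lowering_nonneg s t z y) (hg z)

lemma raising_mulVec_apply_ne_zero [Fintype (Submodule F V)] {g : Submodule F V → ℂ}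
    (hg : 0 ≤ g) {s t : ℕ} {y z : Submodule F V} (hyz : lowering x s t z y ≠ 0) (hgz : g z ≠ 0) :
    (raising x s t *ᵥ g) y ≠ 0 := fun h =>
  mul_ne_zero hyz hgz <| (Finset.sum_eq_zero_iff_of_nonneg fun z _ =>
    mul_nonneg (lowering_nonneg s t z y) (hg z)).1 h z (Finset.mem_univ z)

lemma single_bot_mem_gradedPart [DecidableEq (Submodule F V)] :
    (Pi.single ⊥ 1 : Submodule F V → ℂ) ∈ gradedPart x 0 0 := by
  intro y hy
  obtain rfl : y = ⊥ := by
    by_contra h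
    exact hy (Pi.single_eq_of_ne h _)
  rw [inf_bot_eq, finrank_bot]
  exact ⟨rfl, rfl⟩

variable [FiniteDimensional F V]

lemma exists_lowering_one_zero_ne_zero {y : Submodule F V} (h : x ⊓ y ≠ ⊥) :
    ∃ z, lowering x 1 0 z y ≠ 0 := by
  obtain ⟨z, hzy, hxz⟩ := exists_covBy_inf_covBy h
  rw [covBy_iff_finrank] at hzy hxz
  exact ⟨z, by rw [lowering, if_pos ⟨hzy.1, hzy.2, hxz.2⟩]; exact one_ne_zero⟩

lemma exists_lowering_zero_one_ne_zero {y : Submodule F V} (h : x ⊓ y < y) :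
    ∃ z, lowering x 0 1 z y ≠ 0 := by
  obtain ⟨z, hxz, hzy⟩ := exists_le_covBy_of_lt h
  have hinf : x ⊓ z = x ⊓ y :=
    le_antisymm (inf_le_inf_left x hzy.le) (le_inf inf_le_left hxz)
  rw [covBy_iff_finrank] at hzy
  exact ⟨z, by rw [lowering, if_pos ⟨hzy.1, hzy.2, by rw [hinf, add_zero]⟩]; exact one_ne_zero⟩

variable [Fintype (Submodule F V)]

lemma loweringRaisingCommutator_apply_nonneg_of_ne {y z : Submodule F V} (hyz : y ≠ z) :
    0 ≤ loweringRaisingCommutator x 1 0 y z := by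
  rw [loweringRaisingCommutator, Matrix.sub_apply, lowering_mul_raising_apply rfl rfl hyz,
    raising_mul_lowering_apply rfl rfl hyz, sub_nonneg]
  have hdim := Submodule.finrank_sup_add_finrank_inf_eq y z
  have hsub := finrank_inf_add_finrank_inf_le x y z
  have hysup := finrank_add_finrank_inf_le x (le_sup_left : y ≤ y ⊔ z)
  simp only [lowering, le_sup_left, le_sup_right, inf_le_left, inf_le_right, true_and,
    ite_zero_mul_ite_zero, mul_one]
  split_ifs <;> first | norm_num; done | (exfalso; lia)

variable [DecidableEq (Submodule F V)] [Finite F]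

lemma casimir_mulVec_single_bot :
    casimir x *ᵥ (Pi.single ⊥ 1 : Submodule F V → ℂ) =
      ((Nat.card F : ℂ) ^ finrank F x) • Pi.single ⊥ 1 := by
  rw [casimir_mulVec_eq_smul_iff single_bot_mem_gradedPart, loweringRaisingCommutator, sub_mulVec,
    ← mulVec_mulVec, ← mulVec_mulVec,
    lowering_mulVec_eq_zero single_bot_mem_gradedPart (Or.inl zero_lt_one), mulVec_zero, sub_zero]
  ext y
  rcases eq_or_ne y ⊥ with rfl | hy
  · have hlines : (lowering x 1 0 * raising x 1 0) ⊥ ⊥ =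
        ({u | (⊥ : Submodule F V) ⋖ u ∧ u ≤ x}.ncard : ℂ) := by
      classical
      rw [← sum_ite_one_zero_eq_ncard, Matrix.mul_apply]
      refine Finset.sum_congr rfl fun u _ => ?_
      rw [raising, transpose_apply, ← sq, lowering_one_zero_apply, bot_sup_eq, ite_pow, one_pow,
        zero_pow two_ne_zero]
    rw [mulVec_mulVec, mulVec_single_one, col_apply, hlines, ncard_covers bot_le, finrank_bot]
    simp [div_eq_inv_mul]
  · have hmem : lowering x 1 0 *ᵥ raising x 1 0 *ᵥ (Pi.single ⊥ 1 : Submodule F V → ℂ) ∈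
        gradedPart x 0 0 :=
      lowering_mulVec_mem (raising_mulVec_mem single_bot_mem_gradedPart)
    rw [Pi.smul_apply, Pi.single_eq_of_ne hy, smul_zero]
    by_contra hne
    exact hy (Submodule.finrank_eq_zero.1 (hmem y hne).2)

variable (x) in
lemma exists_positive_casimir_eigenvector (i j : ℕ) :
    ∃ g ∈ gradedPart x i j, 0 ≤ g ∧
      (∀ y, finrank F ↥(x ⊓ y) = i → finrank F y = i + j → g y ≠ 0) ∧
      casimir x *ᵥ g = ((Nat.card F : ℂ) ^ finrank F x) • g := by
  have hstep {s t : ℕ} {g : Submodule F V → ℂ} (hcomm : Commute (casimir x) (raising x s t))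
      (hg : casimir x *ᵥ g = ((Nat.card F : ℂ) ^ finrank F x) • g) :=
    casimir_mulVec_pow_apply hcomm hg 1
  induction j with
  | zero =>
    induction i with
    | zero =>
      refine ⟨Pi.single ⊥ 1, single_bot_mem_gradedPart, Pi.single_nonneg.2 zero_le_one,
        fun y _ hy => ?_, casimir_mulVec_single_bot⟩
      rw [Submodule.finrank_eq_zero.1 hy, Pi.single_eq_same]
      exact one_ne_zero
    | succ i ih =>
      obtain ⟨g, hmem, hg, hpos, hcas⟩ := ih
      refine ⟨_, raising_mulVec_mem (s := 1) (t := 0) hmem, raising_mulVec_nonneg hg 1 0,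
        fun y hxy hy => ?_, hstep (commute_casimir_raising_one_zero x) hcas⟩
      obtain ⟨z, hz⟩ := exists_lowering_one_zero_ne_zero (x := x) (y := y) fun h => by
        rw [h, finrank_bot] at hxy
        lia
      obtain ⟨-, hd, hi⟩ := of_lowering_apply_ne_zero hz
      exact raising_mulVec_apply_ne_zero hg hz (hpos z (by lia) (by lia))
  | succ j ih =>
    obtain ⟨g, hmem, hg, hpos, hcas⟩ := ih
    refine ⟨_, raising_mulVec_mem (s := 0) (t := 1) hmem, raising_mulVec_nonneg hg 0 1,
      fun y hxy hy => ?_, hstep (commute_casimir_raising_zero_one x) hcas⟩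
    obtain ⟨z, hz⟩ := exists_lowering_zero_one_ne_zero (x := x) (y := y)
      (lt_of_le_of_ne inf_le_right fun h => by rw [h] at hxy; lia)
    obtain ⟨-, hd, hi⟩ := of_lowering_apply_ne_zero hz
    exact raising_mulVec_apply_ne_zero hg hz (hpos z (by lia) (by lia))

lemma le_finrank_of_casimir_mulVec_eq_smul {i j k : ℕ} {f : Submodule F V → ℂ}
    (hf : f ∈ gradedPart x i j) (hf0 : f ≠ 0)
    (h : casimir x *ᵥ f = ((Nat.card F : ℂ) ^ k) • f) : k ≤ finrank F x := by
  obtain ⟨g, hgmem, hg, hpos, hcas⟩ := exists_positive_casimir_eigenvector x i j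
  have hle := re_eigenvalue_le_of_offDiag_nonneg
    (fun y z => loweringRaisingCommutator_apply_nonneg_of_ne) hg
    (fun y hy => hpos y (hf y hy).1 (hf y hy).2) hf0
    ((casimir_mulVec_eq_smul_iff hf).1 h) ((casimir_mulVec_eq_smul_iff hgmem).1 hcas)
  have hq : (1 : ℝ) < Nat.card F := mod_cast Finite.one_lt_card
  have hcast (m : ℕ) : ((Nat.card F : ℂ) ^ j / (Nat.card F - 1) *
      ((Nat.card F : ℂ) ^ m / Nat.card F ^ i - Nat.card F ^ i)).re =
      (Nat.card F : ℝ) ^ j / (Nat.card F - 1) *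
        ((Nat.card F : ℝ) ^ m / Nat.card F ^ i - Nat.card F ^ i) := by
    rw [← Complex.ofReal_re ((Nat.card F : ℝ) ^ j / _ * _)]
    push_cast
    rfl
  have hpos' : 0 < (Nat.card F : ℝ) ^ j / (Nat.card F - 1) := by
    have := sub_pos.2 hq
    positivity
  rw [hcast, hcast, mul_le_mul_iff_right₀ hpos', sub_le_sub_iff_right,
    div_le_div_iff_of_pos_right (by positivity)] at hle
  exact (pow_le_pow_iff_right₀ hq).1 hle

end Perron

section MatrixModule

open Matrix
open scoped ComplexOrder

variable {ι : Type} [Fintype ι] [DecidableEq ι] {Hg : Subalgebra ℂ (Matrix ι ι ℂ)}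
  {W : Submodule ℂ (ι → ℂ)} {M : Matrix ι ι ℂ} {f w : ι → ℂ}

lemma MatStable.mulVec_mem (hW : MatStable Hg W) (hM : M ∈ Hg) (hf : f ∈ W) : M *ᵥ f ∈ W :=
  hW M hM (Submodule.mem_map_of_mem hf)

lemma MatStable.pow_apply_mem (hW : MatStable Hg W) (hM : M ∈ Hg) (hf : f ∈ W) (m : ℕ) :
    (M.mulVecLin ^ m) f ∈ W := by
  induction m with
  | zero => exact hf
  | succ m ih =>
    rw [pow_succ']
    exact hW.mulVec_mem hM ih

lemma matStable_adjoin {s : Set (Matrix ι ι ℂ)} (h : ∀ M ∈ s, ∀ f ∈ W, M *ᵥ f ∈ W) :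
    MatStable (Algebra.adjoin ℂ s) W := by
  rintro M hM - ⟨f, hf, rfl⟩
  induction hM using Algebra.adjoin_induction generalizing f with
  | mem M hM => exact h M hM f hf
  | algebraMap c =>
    rw [mulVecLin_apply, Algebra.algebraMap_eq_smul_one, smul_mulVec, one_mulVec]
    exact W.smul_mem c hf
  | add M N _ _ ihM ihN =>
    rw [mulVecLin_add]
    exact W.add_mem (ihM f hf) (ihN f hf)
  | mul M N _ _ ihM ihN =>
    rw [mulVecLin_mul]
    exact ihM _ (ihN f hf)

lemma MatSimple.mulVec_eq_smul_of_commute (hW : MatSimple Hg W) (hM : ∀ N ∈ Hg, Commute M N)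
    {β : ℂ} (hf : f ∈ W) (hf0 : f ≠ 0) (h : M *ᵥ f = β • f) {g : ι → ℂ} (hg : g ∈ W) :
    M *ᵥ g = β • g := by
  let U := W ⊓ LinearMap.ker (M.mulVecLin - β • LinearMap.id)
  have mem_ker (g : ι → ℂ) : g ∈ LinearMap.ker (M.mulVecLin - β • LinearMap.id) ↔
      M *ᵥ g = β • g := by
    simp [sub_eq_zero]
  have hstable : MatStable Hg U := by
    rintro N hN - ⟨g, ⟨hgW, hgβ⟩, rfl⟩
    refine ⟨hW.1.mulVec_mem hN hgW, (mem_ker _).2 ?_⟩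
    rw [mulVecLin_apply, mulVec_mulVec, (hM N hN).eq, ← mulVec_mulVec, (mem_ker g).1 hgβ,
      mulVec_smul]
  have hne : U ≠ ⊥ := (Submodule.ne_bot_iff U).2 ⟨f, ⟨hf, (mem_ker f).2 h⟩, hf0⟩
  have hUW : U = W := (hW.2.2 U inf_le_left hstable).resolve_left hne
  exact (mem_ker g).1 (hUW.ge hg).2

/-- The submodule `Hg w` generated by a vector `w`. -/
def cyclicSubmodule (Hg : Subalgebra ℂ (Matrix ι ι ℂ)) (w : ι → ℂ) : Submodule ℂ (ι → ℂ) :=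
  (Subalgebra.toSubmodule Hg).map ((mulVecBilin ℂ ℂ).flip w)

lemma mem_cyclicSubmodule : f ∈ cyclicSubmodule Hg w ↔ ∃ M ∈ Hg, M *ᵥ w = f :=
  Iff.rfl

lemma self_mem_cyclicSubmodule : w ∈ cyclicSubmodule Hg w :=
  ⟨1, Hg.one_mem, one_mulVec w⟩

lemma matStable_cyclicSubmodule : MatStable Hg (cyclicSubmodule Hg w) := by
  rintro M hM - ⟨f, ⟨N, hN, rfl⟩, rfl⟩
  exact ⟨M * N, Hg.mul_mem hM hN, (mulVec_mulVec w M N).symm⟩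

lemma MatStable.cyclicSubmodule_le (hW : MatStable Hg W) (hw : w ∈ W) :
    cyclicSubmodule Hg w ≤ W := by
  rintro - ⟨M, hM, rfl⟩
  exact hW.mulVec_mem hM hw

/-- A submodule on which `E` vanishes is orthogonal to `Hg w`; any other one contains `w`. -/
lemma matSimple_cyclicSubmodule (hstar : ∀ M ∈ Hg, Mᴴ ∈ Hg) {E : Matrix ι ι ℂ} (hE : E ∈ Hg)
    (hEH : E.IsHermitian) (hEw : E *ᵥ w = w) (hw : w ≠ 0)
    (hline : ∀ f ∈ cyclicSubmodule Hg w, ∃ c : ℂ, E *ᵥ f = c • w) :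
    MatSimple Hg (cyclicSubmodule Hg w) := by
  refine ⟨matStable_cyclicSubmodule,
    (Submodule.ne_bot_iff _).2 ⟨w, self_mem_cyclicSubmodule, hw⟩, fun U hU hstable => ?_⟩
  by_cases hvanish : ∀ f ∈ U, E *ᵥ f = 0
  · refine Or.inl ((Submodule.eq_bot_iff U).2 fun f hf => ?_)
    obtain ⟨M, hM, rfl⟩ := mem_cyclicSubmodule.1 (hU hf)
    have horth : star (M *ᵥ w) ⬝ᵥ (M *ᵥ w) = 0 := by
      calc star (M *ᵥ w) ⬝ᵥ (M *ᵥ w) = star (E *ᵥ w) ⬝ᵥ (Mᴴ *ᵥ M *ᵥ w) := by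
            rw [hEw, star_mulVec, ← dotProduct_mulVec]
        _ = star w ⬝ᵥ (E *ᵥ Mᴴ *ᵥ M *ᵥ w) := by
            rw [star_mulVec, hEH.eq, ← dotProduct_mulVec]
        _ = 0 := by
            rw [hvanish _ (hstable.mulVec_mem (hstar M hM) hf), dotProduct_zero]
    exact dotProduct_star_self_eq_zero.1 horth
  · push Not at hvanish
    obtain ⟨f, hf, hEf⟩ := hvanish
    obtain ⟨c, hc⟩ := hline f (hU hf)
    rw [hc, smul_ne_zero_iff] at hEf
    have hwU : w ∈ U := (U.smul_mem_iff hEf.1).1 (hc ▸ hstable.mulVec_mem hE hf)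
    exact Or.inr (le_antisymm hU (hstable.cyclicSubmodule_le hwU))

end MatrixModule

section HModule

open Matrix
open scoped Classical

variable {F : Type} [Field F] {a b : ℕ} {x : Submodule F (Fin (a + b) → F)}
  {M : Matrix (Submodule F (Fin (a + b) → F)) (Submodule F (Fin (a + b) → F)) ℂ}
  {W : Submodule ℂ (Submodule F (Fin (a + b) → F) → ℂ)} {i j : ℕ}
  {f : Submodule F (Fin (a + b) → F) → ℂ}

lemma Estar_eq_gradingDiagonal (i j : ℤ) : Estar F a b x i j =
    gradingDiagonal x fun k d => if (k : ℤ) = i ∧ (d : ℤ) = i + j then 1 else 0 :=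
  rfl

lemma isHermitian_Estar (i j : ℤ) : (Estar F a b x i j).IsHermitian := by
  rw [Estar, IsHermitian, diagonal_conjTranspose]
  congr 1
  ext y
  rw [Pi.star_apply, apply_ite star, star_one, star_zero]

lemma bddAbove_setOf_gradedPart_ne_bot :
    BddAbove {i | ∃ j, W ⊓ gradedPart x i j ≠ ⊥} := by
  refine ⟨finrank F x, fun i ⟨j, h⟩ => ?_⟩
  obtain ⟨f, hf, hf0⟩ := (Submodule.ne_bot_iff _).1 h
  exact (le_of_mem_gradedPart hf.2 hf0).1

variable [Fintype F]

variable (F a b x) in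
lemma Halg_eq_adjoin : Halg F a b x = Algebra.adjoin ℂ
    ({lowering x 1 0, lowering x 0 1, raising x 1 0, raising x 0 1} ∪
      {M | ∃ i : ℕ, i ≤ a ∧ ∃ j : ℕ, j ≤ b ∧ M = Estar F a b x i j}) :=
  rfl

lemma lowering_one_zero_mem_Halg : lowering x 1 0 ∈ Halg F a b x :=
  Algebra.subset_adjoin (Or.inl (Or.inl rfl))

lemma lowering_zero_one_mem_Halg : lowering x 0 1 ∈ Halg F a b x :=
  Algebra.subset_adjoin (Or.inl (Or.inr (Or.inl rfl)))

lemma raising_one_zero_mem_Halg : raising x 1 0 ∈ Halg F a b x :=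
  Algebra.subset_adjoin (Or.inl (Or.inr (Or.inr (Or.inl rfl))))

lemma raising_zero_one_mem_Halg : raising x 0 1 ∈ Halg F a b x :=
  Algebra.subset_adjoin (Or.inl (Or.inr (Or.inr (Or.inr rfl))))

lemma Estar_mem_Halg (hi : i ≤ a) (hj : j ≤ b) : Estar F a b x i j ∈ Halg F a b x :=
  Algebra.subset_adjoin (Or.inr ⟨i, hi, j, hj, rfl⟩)

lemma commute_casimir_of_mem_Halg (hM : M ∈ Halg F a b x) : Commute (casimir x) M := by
  rw [Halg_eq_adjoin] at hM
  refine Algebra.commute_of_mem_adjoin_of_forall_mem_commute hM ?_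
  rintro N ((rfl | rfl | rfl | rfl) | ⟨i, -, j, -, rfl⟩)
  · exact commute_casimir_lowering x (commute_casimir_raising_one_zero x)
  · exact commute_casimir_lowering x (commute_casimir_raising_zero_one x)
  · exact commute_casimir_raising_one_zero x
  · exact commute_casimir_raising_zero_one x
  · rw [Estar_eq_gradingDiagonal]
    exact commute_casimir_gradingDiagonal x _

lemma conjTranspose_mem_Halg (hM : M ∈ Halg F a b x) : Mᴴ ∈ Halg F a b x := by
  rw [Halg_eq_adjoin] at hM
  induction hM using Algebra.adjoin_induction with
  | mem M hM =>
    obtain (rfl | rfl | rfl | rfl) | ⟨i, hi, j, hj, rfl⟩ := hM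
    · rw [conjTranspose_lowering]
      exact raising_one_zero_mem_Halg
    · rw [conjTranspose_lowering]
      exact raising_zero_one_mem_Halg
    · rw [conjTranspose_raising]
      exact lowering_one_zero_mem_Halg
    · rw [conjTranspose_raising]
      exact lowering_zero_one_mem_Halg
    · exact (isHermitian_Estar (x := x) i j).symm ▸ Estar_mem_Halg hi hj
  | algebraMap c =>
    rw [Algebra.algebraMap_eq_smul_one, conjTranspose_smul, conjTranspose_one,
      ← Algebra.algebraMap_eq_smul_one]
    exact Subalgebra.algebraMap_mem _ _
  | add M N _ _ ihM ihN => exact conjTranspose_add M N ▸ add_mem ihM ihN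
  | mul M N _ _ ihM ihN => exact conjTranspose_mul M N ▸ mul_mem ihN ihM

lemma Estar_mulVec_apply (i j : ℕ) (y : Submodule F (Fin (a + b) → F)) :
    (Estar F a b x i j *ᵥ f) y =
      if finrank F ↥(x ⊓ y) = i ∧ finrank F y = i + j then f y else 0 := by
  rw [Estar, mulVec_diagonal, ite_zero_mul, one_mul]
  norm_cast

lemma Estar_mulVec_mem_gradedPart : Estar F a b x i j *ᵥ f ∈ gradedPart x i j := by
  intro y hy
  rw [Estar_mulVec_apply] at hy
  exact (ite_ne_right_iff.1 hy).1

lemma Estar_mulVec_of_mem_gradedPart (hf : f ∈ gradedPart x i j) (k l : ℕ) :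
    Estar F a b x k l *ᵥ f = if i = k ∧ j = l then f else 0 := by
  ext y
  rw [Estar_mulVec_apply, ite_apply, Pi.zero_apply]
  by_cases hy : f y = 0
  · rw [hy, ite_self, ite_self]
  · obtain ⟨hi, hd⟩ := hf y hy
    exact if_congr (by lia) rfl rfl

lemma MatStable.Estar_mulVec_mem (hx : finrank F x = a) (hW : MatStable (Halg F a b x) W)
    (hf : f ∈ W) (i j : ℕ) : Estar F a b x i j *ᵥ f ∈ W := by
  by_cases h : Estar F a b x i j *ᵥ f = 0
  · exact h ▸ W.zero_mem
  · obtain ⟨hi, hj⟩ := le_of_mem_gradedPart Estar_mulVec_mem_gradedPart h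
    rw [finrank_fin_fun] at hj
    exact hW.mulVec_mem (Estar_mem_Halg (by lia) (by lia)) hf

lemma map_sum_Estar_ne_bot_iff (hx : finrank F x = a) (hW : MatStable (Halg F a b x) W)
    {κ : Type*} (s : Finset κ) {i j : κ → ℕ} (hij : Function.Injective fun k => (i k, j k)) :
    W.map (∑ k ∈ s, Estar F a b x (i k) (j k)).mulVecLin ≠ ⊥ ↔
      ∃ k ∈ s, W ⊓ gradedPart x (i k) (j k) ≠ ⊥ := by
  simp only [Submodule.ne_bot_iff]
  constructor
  · rintro ⟨-, ⟨f, hf, rfl⟩, hne⟩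
    rw [mulVecLin_apply, sum_mulVec] at hne
    obtain ⟨k, hk, hkne⟩ := Finset.exists_ne_zero_of_sum_ne_zero hne
    exact ⟨k, hk, _, ⟨hW.Estar_mulVec_mem hx hf _ _, Estar_mulVec_mem_gradedPart⟩, hkne⟩
  · rintro ⟨k, hk, f, ⟨hf, hfk⟩, hne⟩
    refine ⟨f, ⟨f, hf, ?_⟩, hne⟩
    rw [mulVecLin_apply, sum_mulVec, Finset.sum_eq_single_of_mem k hk]
    · rw [Estar_mulVec_of_mem_gradedPart hfk, if_pos ⟨rfl, rfl⟩]
    · intro l _ hlk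
      rw [Estar_mulVec_of_mem_gradedPart hfk,
        if_neg fun h => hlk (hij (Prod.ext h.1 h.2)).symm]

lemma setOf_map_sum_Estar_row_ne_bot (hx : finrank F x = a)
    (hW : MatStable (Halg F a b x) W) :
    {i : ℕ | W.map (∑ j ∈ Finset.range (b + 1), Estar F a b x i j).mulVecLin ≠ ⊥} =
      {i | ∃ j, W ⊓ gradedPart x i j ≠ ⊥} := by
  ext i
  refine (map_sum_Estar_ne_bot_iff hx hW _ (i := fun _ => i) (j := id)
    fun k l h => congrArg Prod.snd h).trans ?_
  refine ⟨fun ⟨j, _, h⟩ => ⟨j, h⟩, fun ⟨j, h⟩ => ⟨j, ?_, h⟩⟩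
  obtain ⟨f, hf, hf0⟩ := (Submodule.ne_bot_iff _).1 h
  have := (le_of_mem_gradedPart hf.2 hf0).2
  rw [finrank_fin_fun] at this
  exact Finset.mem_range.2 (by lia)

lemma setOf_map_sum_Estar_column_ne_bot (hx : finrank F x = a)
    (hW : MatStable (Halg F a b x) W) :
    {j : ℕ | W.map (∑ i ∈ Finset.range (a + 1), Estar F a b x i j).mulVecLin ≠ ⊥} =
      {j | ∃ i, W ⊓ gradedPart x i j ≠ ⊥} := by
  ext j
  refine (map_sum_Estar_ne_bot_iff hx hW _ (i := id) (j := fun _ => j)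
    fun k l h => congrArg Prod.fst h).trans ?_
  refine ⟨fun ⟨i, _, h⟩ => ⟨i, h⟩, fun ⟨i, h⟩ => ⟨i, ?_, h⟩⟩
  obtain ⟨f, hf, hf0⟩ := (Submodule.ne_bot_iff _).1 h
  have := (le_of_mem_gradedPart hf.2 hf0).1
  exact Finset.mem_range.2 (by lia)

lemma MatStable.exists_mem_gradedPart (hx : finrank F x = a) (hW : MatStable (Halg F a b x) W)
    (hW0 : W ≠ ⊥) : ∃ i j, W ⊓ gradedPart x i j ≠ ⊥ := by
  obtain ⟨f, hf, hf0⟩ := (Submodule.ne_bot_iff W).1 hW0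
  obtain ⟨y, hy⟩ := Function.ne_iff.1 hf0
  have hle := Submodule.finrank_mono (inf_le_right : x ⊓ y ≤ y)
  refine ⟨finrank F ↥(x ⊓ y), finrank F y - finrank F ↥(x ⊓ y), (Submodule.ne_bot_iff _).2
    ⟨_, ⟨hW.Estar_mulVec_mem hx hf _ _, Estar_mulVec_mem_gradedPart⟩, fun h => hy ?_⟩⟩
  have := congrFun h y
  rwa [Estar_mulVec_apply, if_pos ⟨rfl, by lia⟩] at this

lemma lowNu_mem (hx : finrank F x = a) (hW : MatStable (Halg F a b x) W) (hW0 : W ≠ ⊥) :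
    ∃ j, W ⊓ gradedPart x (lowNu F a b x W) j ≠ ⊥ := by
  rw [lowNu, setOf_map_sum_Estar_row_ne_bot hx hW]
  exact Nat.sInf_mem (hW.exists_mem_gradedPart hx hW0)

lemma lowNu_le (hx : finrank F x = a) (hW : MatStable (Halg F a b x) W) (hf : f ∈ W)
    (hfij : f ∈ gradedPart x i j) (hf0 : f ≠ 0) : lowNu F a b x W ≤ i := by
  rw [lowNu, setOf_map_sum_Estar_row_ne_bot hx hW]
  exact Nat.sInf_le ⟨j, (Submodule.ne_bot_iff _).2 ⟨f, ⟨hf, hfij⟩, hf0⟩⟩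

lemma lowMu_mem (hx : finrank F x = a) (hW : MatStable (Halg F a b x) W) (hW0 : W ≠ ⊥) :
    ∃ i, W ⊓ gradedPart x i (lowMu F a b x W) ≠ ⊥ := by
  rw [lowMu, setOf_map_sum_Estar_column_ne_bot hx hW]
  obtain ⟨i, j, h⟩ := hW.exists_mem_gradedPart hx hW0
  exact Nat.sInf_mem (s := {j | ∃ i, W ⊓ gradedPart x i j ≠ ⊥}) ⟨j, i, h⟩

lemma lowMu_le (hx : finrank F x = a) (hW : MatStable (Halg F a b x) W) (hf : f ∈ W)
    (hfij : f ∈ gradedPart x i j) (hf0 : f ≠ 0) : lowMu F a b x W ≤ j := by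
  rw [lowMu, setOf_map_sum_Estar_column_ne_bot hx hW]
  exact Nat.sInf_le ⟨i, (Submodule.ne_bot_iff _).2 ⟨f, ⟨hf, hfij⟩, hf0⟩⟩

lemma upNu_mem (hx : finrank F x = a) (hW : MatStable (Halg F a b x) W) (hW0 : W ≠ ⊥) :
    ∃ j, W ⊓ gradedPart x (upNu F a b x W) j ≠ ⊥ := by
  rw [upNu, setOf_map_sum_Estar_row_ne_bot hx hW]
  exact Nat.sSup_mem (hW.exists_mem_gradedPart hx hW0) bddAbove_setOf_gradedPart_ne_bot

lemma le_upNu (hx : finrank F x = a) (hW : MatStable (Halg F a b x) W) (hf : f ∈ W)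
    (hfij : f ∈ gradedPart x i j) (hf0 : f ≠ 0) : i ≤ upNu F a b x W := by
  rw [upNu, setOf_map_sum_Estar_row_ne_bot hx hW]
  exact le_csSup bddAbove_setOf_gradedPart_ne_bot
    ⟨j, (Submodule.ne_bot_iff _).2 ⟨f, ⟨hf, hfij⟩, hf0⟩⟩

end HModule

section Forward

open Matrix
open scoped Classical

variable {F : Type} [Field F] [Fintype F] {a b : ℕ} {x : Submodule F (Fin (a + b) → F)}
  {W : Submodule ℂ (Submodule F (Fin (a + b) → F) → ℂ)} {i j : ℕ}
  {f : Submodule F (Fin (a + b) → F) → ℂ} {β : ℂ}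

lemma loweringRaisingCommutator_mulVec_mem_gradedPart (hf : f ∈ gradedPart x i j) :
    loweringRaisingCommutator x 1 0 *ᵥ f ∈ gradedPart x i j := by
  have hcomm := congrArg (· *ᵥ f) (loweringRaisingCommutator_mul_gradingDiagonal x
    (fun k d => if (k : ℤ) = i ∧ (d : ℤ) = i + j then 1 else 0) 1 0)
  simp only [← mulVec_mulVec, ← Estar_eq_gradingDiagonal] at hcomm
  rw [Estar_mulVec_of_mem_gradedPart hf, if_pos ⟨rfl, rfl⟩] at hcomm
  exact hcomm ▸ Estar_mulVec_mem_gradedPart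

lemma exists_casimir_eigenvector (hW : MatStable (Halg F a b x) W)
    (hne : W ⊓ gradedPart x i j ≠ ⊥) : ∃ f ∈ W, f ≠ 0 ∧ ∃ β : ℂ, casimir x *ᵥ f = β • f := by
  have hmem : loweringRaisingCommutator x 1 0 ∈ Halg F a b x :=
    sub_mem (mul_mem lowering_one_zero_mem_Halg raising_one_zero_mem_Halg)
      (mul_mem raising_one_zero_mem_Halg lowering_one_zero_mem_Halg)
  have hinv : ∀ f ∈ W ⊓ gradedPart x i j,
      (loweringRaisingCommutator x 1 0).mulVecLin f ∈ W ⊓ gradedPart x i j := fun f hf =>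
    ⟨hW.mulVec_mem hmem hf.1, loweringRaisingCommutator_mulVec_mem_gradedPart hf.2⟩
  have := Submodule.nontrivial_iff_ne_bot.2 hne
  obtain ⟨t, ht⟩ := Module.End.exists_eigenvalue (LinearMap.restrict _ hinv)
  obtain ⟨⟨f, hfW, hfij⟩, hft, hf0⟩ := ht.exists_hasEigenvector
  refine ⟨f, hfW, fun h => hf0 (Subtype.ext h),
    Nat.card F ^ i * (t * (Nat.card F - 1) / Nat.card F ^ j + Nat.card F ^ i),
    (casimir_mulVec_eq_smul_iff hfij).2 ?_⟩
  have hq := natCard_ne_zero_complex (F := F)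
  have hq1 := natCard_sub_one_ne_zero_complex (F := F)
  have heigen := congrArg Subtype.val (Module.End.mem_eigenspace_iff.1 hft)
  refine Eq.trans heigen (congrArg (· • f) ?_)
  field_simp
  ring

lemma MatSimple.exists_casimir_eigenvalue (hx : finrank F x = a)
    (hW : MatSimple (Halg F a b x) W) : ∃ β : ℂ, ∀ f ∈ W, casimir x *ᵥ f = β • f := by
  obtain ⟨i, j, hne⟩ := hW.1.exists_mem_gradedPart hx hW.2.1
  obtain ⟨f, hf, hf0, β, hβ⟩ := exists_casimir_eigenvector hW.1 hne
  exact ⟨β, fun g => hW.mulVec_eq_smul_of_commute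
    (fun M => commute_casimir_of_mem_Halg) hf hf0 hβ⟩

lemma lowering_one_zero_mulVec_eq_zero (hx : finrank F x = a) (hW : MatStable (Halg F a b x) W)
    (hf : f ∈ W) (hfij : f ∈ gradedPart x (lowNu F a b x W) j) : lowering x 1 0 *ᵥ f = 0 := by
  by_contra hne
  obtain h | h := (lowNu F a b x W).eq_zero_or_pos
  · exact hne (lowering_mulVec_eq_zero hfij (Or.inl (by lia)))
  · obtain ⟨i, hi⟩ := Nat.exists_eq_add_one.2 h
    have := lowNu_le hx hW (hW.mulVec_mem lowering_one_zero_mem_Halg hf)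
      (lowering_mulVec_mem (hi ▸ hfij)) hne
    lia

lemma lowering_zero_one_mulVec_eq_zero (hx : finrank F x = a) (hW : MatStable (Halg F a b x) W)
    (hf : f ∈ W) (hfij : f ∈ gradedPart x i (lowMu F a b x W)) : lowering x 0 1 *ᵥ f = 0 := by
  by_contra hne
  obtain h | h := (lowMu F a b x W).eq_zero_or_pos
  · exact hne (lowering_mulVec_eq_zero hfij (Or.inr (by lia)))
  · obtain ⟨j, hj⟩ := Nat.exists_eq_add_one.2 h
    have := lowMu_le hx hW (hW.mulVec_mem lowering_zero_one_mem_Halg hf)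
      (lowering_mulVec_mem (hj ▸ hfij)) hne
    lia

lemma raising_one_zero_mulVec_eq_zero (hx : finrank F x = a) (hW : MatStable (Halg F a b x) W)
    (hf : f ∈ W) (hfij : f ∈ gradedPart x (upNu F a b x W) j) : raising x 1 0 *ᵥ f = 0 := by
  by_contra hne
  have := le_upNu hx hW (hW.mulVec_mem raising_one_zero_mem_Halg hf)
    (raising_mulVec_mem hfij) hne
  lia

/-- The chains of `R₁` from the lowest row and of `L₁` from the highest row bound each other. -/
lemma casimir_eigenvalue_eq (hx : finrank F x = a) (hW : MatStable (Halg F a b x) W)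
    (hW0 : W ≠ ⊥) (hβ : ∀ f ∈ W, casimir x *ᵥ f = β • f) :
    β = (Nat.card F : ℂ) ^ (lowNu F a b x W + upNu F a b x W) := by
  obtain ⟨j, hne⟩ := lowNu_mem hx hW hW0
  obtain ⟨f, ⟨hf, hfj⟩, hf0⟩ := (Submodule.ne_bot_iff _).1 hne
  obtain ⟨k, hk, hβk⟩ := exists_raising_one_zero_pow_ne_zero hfj hf0 (hβ f hf)
    (lowering_one_zero_mulVec_eq_zero hx hW hf hfj)
  have hup := le_upNu hx hW (hW.pow_apply_mem raising_one_zero_mem_Halg hf k)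
    (raising_pow_apply_mem hfj k) hk
  obtain ⟨j', hne'⟩ := upNu_mem hx hW hW0
  obtain ⟨g, ⟨hg, hgj⟩, hg0⟩ := (Submodule.ne_bot_iff _).1 hne'
  obtain ⟨l, hl, hβl⟩ := exists_lowering_one_zero_pow_ne_zero hgj hg0 (hβ g hg)
    (raising_one_zero_mulVec_eq_zero hx hW hg hgj)
  obtain ⟨i, hi⟩ := Nat.exists_eq_add_of_le' <| not_lt.1 fun h =>
    hl (lowering_one_zero_pow_apply_eq_zero hgj h)
  have hlow := lowNu_le hx hW (hW.pow_apply_mem lowering_one_zero_mem_Halg hg l)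
    (lowering_pow_apply_mem (i := i) (j := j') (by rwa [one_mul, zero_mul, ← hi])) hl
  rw [hβk, ← pow_add, ← pow_add] at hβl
  have hexp := natCard_pow_injective hβl
  rw [hβk, ← pow_add]
  congr 1
  lia

lemma exists_lowNu_add_upNu_add_eq (hx : finrank F x = a) (hW : MatStable (Halg F a b x) W)
    (hW0 : W ≠ ⊥) (hβ : ∀ f ∈ W, casimir x *ᵥ f = β • f) :
    ∃ l, lowNu F a b x W + upNu F a b x W + 2 * lowMu F a b x W + l = a + b ∧
      lowMu F a b x W + l ≤ b := by
  obtain ⟨i, hne⟩ := lowMu_mem hx hW hW0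
  obtain ⟨f, ⟨hf, hfi⟩, hf0⟩ := (Submodule.ne_bot_iff _).1 hne
  obtain ⟨l, hl, hβl⟩ := exists_raising_zero_one_pow_ne_zero hfi hf0 (hβ f hf)
    (lowering_zero_one_mulVec_eq_zero hx hW hf hfi)
  have hle := (le_of_mem_gradedPart (raising_pow_apply_mem hfi l) hl).2
  rw [finrank_fin_fun] at hle hβl
  rw [casimir_eigenvalue_eq hx hW hW0 hβ, div_eq_iff (pow_ne_zero _ natCard_ne_zero_complex),
    ← pow_add, ← pow_add] at hβl
  exact ⟨l, by have := natCard_pow_injective hβl; lia, by lia⟩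

lemma lowNu_le_upNu (hx : finrank F x = a) (hW : MatStable (Halg F a b x) W) (hW0 : W ≠ ⊥) :
    lowNu F a b x W ≤ upNu F a b x W := by
  obtain ⟨j, hne⟩ := lowNu_mem hx hW hW0
  obtain ⟨f, ⟨hf, hfj⟩, hf0⟩ := (Submodule.ne_bot_iff _).1 hne
  exact le_upNu hx hW hf hfj hf0

lemma lowNu_add_upNu_le (hx : finrank F x = a) (hW : MatStable (Halg F a b x) W)
    (hW0 : W ≠ ⊥) (hβ : ∀ f ∈ W, casimir x *ᵥ f = β • f) :
    lowNu F a b x W + upNu F a b x W ≤ a := by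
  obtain ⟨j, hne⟩ := lowNu_mem hx hW hW0
  obtain ⟨f, ⟨hf, hfj⟩, hf0⟩ := (Submodule.ne_bot_iff _).1 hne
  rw [casimir_eigenvalue_eq hx hW hW0 hβ] at hβ
  exact (le_finrank_of_casimir_mulVec_eq_smul hfj hf0 (hβ f hf)).trans_eq hx

lemma MatSimple.endpoint_index_bounds (hx : finrank F x = a) (hW : MatSimple (Halg F a b x) W) :
    lowNu F a b x W ≤ a ∧ lowMu F a b x W ≤ b ∧
      max 0 (2 * (lowMu F a b x W : ℤ) - b) ≤ idxH F a b x W ∧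
      idxH F a b x W ≤ min ((a : ℤ) - 2 * lowNu F a b x W) (lowMu F a b x W) := by
  obtain ⟨β, hβ⟩ := hW.exists_casimir_eigenvalue hx
  obtain ⟨l, hsum, hl⟩ := exists_lowNu_add_upNu_add_eq hx hW.1 hW.2.1 hβ
  have hle := lowNu_le_upNu hx hW.1 hW.2.1
  have hadd := lowNu_add_upNu_le hx hW.1 hW.2.1 hβ
  rw [idxH]
  lia

end Forward

section LowestWeightModule

open Matrix
open scoped Classical

variable {F : Type} [Field F] [Fintype F] {a b : ℕ} {x : Submodule F (Fin (a + b) → F)}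
  {i j k l d : ℕ} {f w : Submodule F (Fin (a + b) → F) → ℂ} {β : ℂ}

lemma Estar_mulVec_mem_of_mem_raisingSpan
    {U : Submodule ℂ (Submodule F (Fin (a + b) → F) → ℂ)} (hw : w ∈ gradedPart x i j)
    (hf : f ∈ raisingSpan x w)
    (hU : ∀ m n, i + m = k → j + n = l →
      ((raising x 0 1).mulVecLin ^ n) (((raising x 1 0).mulVecLin ^ m) w) ∈ U) :
    Estar F a b x k l *ᵥ f ∈ U := by
  refine apply_mem_of_mem_raisingSpan (Estar F a b x k l).mulVecLin (fun m n => ?_) hf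
  rw [mulVecLin_apply, Estar_mulVec_of_mem_gradedPart (raising_pow_apply_mem_gradedPart hw m n)]
  split_ifs with h
  · exact hU m n h.1 h.2
  · exact U.zero_mem

lemma matStable_raisingSpan (hw : w ∈ gradedPart x i j) (hL₁ : lowering x 1 0 *ᵥ w = 0)
    (hL₂ : lowering x 0 1 *ᵥ w = 0) (hβ : casimir x *ᵥ w = β • w) :
    MatStable (Halg F a b x) (raisingSpan x w) := by
  rw [Halg_eq_adjoin]
  refine matStable_adjoin ?_
  rintro M ((rfl | rfl | rfl | rfl) | ⟨k, -, l, -, rfl⟩) f hf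
  · exact lowering_one_zero_mulVec_mem_raisingSpan hw hβ hL₁ hf
  · exact lowering_zero_one_mulVec_mem_raisingSpan hw hβ hL₂ hf
  · exact raising_one_zero_mulVec_mem_raisingSpan hf
  · exact raising_zero_one_mulVec_mem_raisingSpan hf
  · exact Estar_mulVec_mem_of_mem_raisingSpan hw hf
      fun m n _ _ => raising_pow_apply_mem_raisingSpan m n

lemma exists_Estar_mulVec_eq_smul (hw : w ∈ gradedPart x i j) (hf : f ∈ raisingSpan x w) :
    ∃ c : ℂ, Estar F a b x i j *ᵥ f = c • w := by
  have hmem : Estar F a b x i j *ᵥ f ∈ Submodule.span ℂ {w} := by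
    refine Estar_mulVec_mem_of_mem_raisingSpan hw hf fun m n hm hn => ?_
    rw [Nat.add_eq_left.1 hm, Nat.add_eq_left.1 hn]
    exact Submodule.mem_span_singleton_self w
  obtain ⟨c, hc⟩ := Submodule.mem_span_singleton.1 hmem
  exact ⟨c, hc.symm⟩

lemma le_of_mem_raisingSpan (hw : w ∈ gradedPart x i j) (hf : f ∈ raisingSpan x w)
    (hfkl : f ∈ gradedPart x k l) (hf0 : f ≠ 0) : i ≤ k ∧ j ≤ l := by
  by_contra h
  have hmem : Estar F a b x k l *ᵥ f ∈ (⊥ : Submodule ℂ (Submodule F (Fin (a + b) → F) → ℂ)) :=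
    Estar_mulVec_mem_of_mem_raisingSpan hw hf fun m n hm hn => (h ⟨by lia, by lia⟩).elim
  rw [Estar_mulVec_of_mem_gradedPart hfkl, if_pos ⟨rfl, rfl⟩] at hmem
  exact hf0 hmem

lemma exists_matSimple_of_casimir_mulVec (hx : finrank F x = a) (hw : w ∈ gradedPart x i j)
    (hw0 : w ≠ 0) (hL₁ : lowering x 1 0 *ᵥ w = 0) (hL₂ : lowering x 0 1 *ᵥ w = 0)
    (hΩ : casimir x *ᵥ w = (Nat.card F : ℂ) ^ d • w) :
    ∃ W, MatSimple (Halg F a b x) W ∧ lowNu F a b x W = i ∧ lowMu F a b x W = j ∧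
      idxH F a b x W = a - d := by
  let W := cyclicSubmodule (Halg F a b x) w
  have hwW : w ∈ W := self_mem_cyclicSubmodule
  have hspan : W ≤ raisingSpan x w := (matStable_raisingSpan hw hL₁ hL₂ hΩ).cyclicSubmodule_le
    (raising_pow_apply_mem_raisingSpan 0 0)
  obtain ⟨hi, hj⟩ := le_of_mem_gradedPart hw hw0
  rw [finrank_fin_fun] at hj
  have hsimple : MatSimple (Halg F a b x) W :=
    matSimple_cyclicSubmodule (fun M => conjTranspose_mem_Halg)
      (Estar_mem_Halg (hi.trans_eq hx) (by lia)) (isHermitian_Estar i j)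
      (by rw [Estar_mulVec_of_mem_gradedPart hw, if_pos ⟨rfl, rfl⟩]) hw0
      fun f hf => exists_Estar_mulVec_eq_smul hw (hspan hf)
  have hW := hsimple.1
  have hW0 := hsimple.2.1
  have hlow : lowNu F a b x W = i := by
    refine le_antisymm (lowNu_le hx hW hwW hw hw0) ?_
    obtain ⟨l, hne⟩ := lowNu_mem hx hW hW0
    obtain ⟨f, ⟨hfW, hf⟩, hf0⟩ := (Submodule.ne_bot_iff _).1 hne
    exact (le_of_mem_raisingSpan hw (hspan hfW) hf hf0).1
  have hlow' : lowMu F a b x W = j := by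
    refine le_antisymm (lowMu_le hx hW hwW hw hw0) ?_
    obtain ⟨k, hne⟩ := lowMu_mem hx hW hW0
    obtain ⟨f, ⟨hfW, hf⟩, hf0⟩ := (Submodule.ne_bot_iff _).1 hne
    exact (le_of_mem_raisingSpan hw (hspan hfW) hf hf0).2
  have hβ : ∀ f ∈ W, casimir x *ᵥ f = (Nat.card F : ℂ) ^ d • f := fun f =>
    hsimple.mulVec_eq_smul_of_commute (fun M => commute_casimir_of_mem_Halg) hwW hw0 hΩ
  have hd := natCard_pow_injective (casimir_eigenvalue_eq hx hW hW0 hβ)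
  refine ⟨W, hsimple, hlow, hlow', ?_⟩
  rw [idxH]
  lia

end LowestWeightModule

section Shears

variable {F V : Type*} [Field F] [AddCommGroup V] [Module F V] (x : Submodule F V)
  (p : Module.End F V)

/-- The endomorphisms `Θ` preserving `x` with `p Θ = 0` and `Θ p = Θ`; they square to zero, so
`Θ ↦ 1 + Θ` embeds them as an abelian unipotent subgroup of the stabiliser of `x` in `GL(V)`. -/
def shears : Submodule F (Module.End F V) where
  carrier := {Θ | p * Θ = 0 ∧ Θ * p = Θ ∧ x ≤ x.comap Θ}
  zero_mem' := ⟨mul_zero p, zero_mul p, fun _ _ => x.zero_mem⟩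
  add_mem' := fun h h' =>
    ⟨by rw [mul_add, h.1, h'.1, add_zero], by rw [add_mul, h.2.1, h'.2.1],
      fun _ hv => x.add_mem (h.2.2 hv) (h'.2.2 hv)⟩
  smul_mem' := fun c _ h =>
    ⟨by rw [mul_smul_comm, h.1, smul_zero], by rw [smul_mul_assoc, h.2.1],
      fun _ hv => x.smul_mem c (h.2.2 hv)⟩

variable {x p}

lemma apply_shears_apply (Θ : shears x p) (v : V) : p (Θ.1 v) = 0 :=
  LinearMap.congr_fun Θ.2.1 v

lemma shears_apply_apply (Θ : shears x p) (v : V) : Θ.1 (p v) = Θ.1 v :=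
  LinearMap.congr_fun Θ.2.2.1 v

lemma shears_mul_eq_zero (Θ Θ' : shears x p) : Θ.1 * Θ'.1 = 0 := by
  rw [← Θ.2.2.1, mul_assoc, Θ'.2.1, mul_zero]

/-- The automorphism `1 + Θ` of `V`. -/
def shear (Θ : shears x p) : V ≃ₗ[F] V :=
  LinearEquiv.ofLinearMap (1 + Θ.1) (1 - Θ.1)
    ((by rw [add_mul, mul_sub, mul_sub, shears_mul_eq_zero]; simp) :
      (1 + Θ.1) * (1 - Θ.1) = 1)
    ((by rw [sub_mul, mul_add, mul_add, shears_mul_eq_zero]; simp) :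
      (1 - Θ.1) * (1 + Θ.1) = 1)

/-- The action of `1 + Θ` on the lattice of subspaces of `V`. -/
def shearSubspace (Θ : shears x p) : Submodule F V ≃o Submodule F V :=
  Submodule.orderIsoMapComap (shear Θ)

variable {Θ Θ' : shears x p} {y z : Submodule F V} {v : V}

lemma mem_shearSubspace : v ∈ shearSubspace Θ y ↔ ∃ u ∈ y, u + Θ.1 u = v := Iff.rfl

lemma shearSubspace_shearSubspace (Θ Θ' : shears x p) (y : Submodule F V) :
    shearSubspace Θ (shearSubspace Θ' y) = shearSubspace (Θ + Θ') y := by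
  have h (u : V) : Θ.1 (Θ'.1 u) = 0 := LinearMap.congr_fun (shears_mul_eq_zero Θ Θ') u
  ext v
  simp only [mem_shearSubspace, exists_exists_and_eq_and, map_add, h, add_zero,
    Submodule.coe_add, LinearMap.add_apply]
  refine exists_congr fun u => and_congr_right fun _ => ?_
  rw [add_right_comm, add_assoc]

lemma shearSubspace_zero (y : Submodule F V) : shearSubspace (0 : shears x p) y = y := by
  ext v
  simp [mem_shearSubspace]

lemma finrank_shearSubspace (Θ : shears x p) (y : Submodule F V) :
    finrank F (shearSubspace Θ y) = finrank F y :=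
  LinearEquiv.finrank_map_eq (shear Θ) y

section FiniteDimensional

variable [FiniteDimensional F V]

lemma shearSubspace_eq_self (h : y ≤ y.comap Θ.1) : shearSubspace Θ y = y := by
  refine Submodule.eq_of_le_of_finrank_le ?_ (finrank_shearSubspace Θ y).ge
  rintro _ ⟨v, hv, rfl⟩
  exact y.add_mem hv (h hv)

lemma finrank_inf_shearSubspace (Θ : shears x p) (y : Submodule F V) :
    finrank F ↥(x ⊓ shearSubspace Θ y) = finrank F ↥(x ⊓ y) := by
  rw [← finrank_shearSubspace Θ (x ⊓ y), map_inf, shearSubspace_eq_self Θ.2.2.2]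

lemma lowering_shearSubspace (Θ : shears x p) (s t : ℕ) (y z : Submodule F V) :
    lowering x s t (shearSubspace Θ y) (shearSubspace Θ z) = lowering x s t y z := by
  unfold lowering
  congr 1
  rw [OrderIso.le_iff_le, finrank_shearSubspace, finrank_shearSubspace,
    finrank_inf_shearSubspace, finrank_inf_shearSubspace]

end FiniteDimensional

lemma shearSubspace_range_injective (hp : IsIdempotentElem p) :
    Function.Injective fun Θ : shears x p => shearSubspace Θ (LinearMap.range p) := by
  intro Θ Θ' h
  ext v
  obtain ⟨_, ⟨u, rfl⟩, hu⟩ := mem_shearSubspace.1 <|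
    h.le (mem_shearSubspace.2 ⟨p v, LinearMap.mem_range_self p v, rfl⟩)
  have hpp (w : V) : p (p w) = p w := LinearMap.congr_fun hp w
  have hpu : p u = p v := by
    simpa only [map_add, apply_shears_apply, add_zero, hpp] using congrArg p hu
  rw [hpu, add_right_inj, shears_apply_apply, shears_apply_apply] at hu
  exact hu.symm

end Shears

section ShearOrbit

variable {F V : Type*} [Field F] [AddCommGroup V] [Module F V] {x z : Submodule F V}
  {p : Module.End F V}

lemma projection_ker_apply_apply (hp : IsIdempotentElem p) (hz : IsCompl z (LinearMap.ker p))
    (v : V) : z.projection (LinearMap.ker p) hz (p v) = z.projection (LinearMap.ker p) hz v := by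
  rw [← sub_eq_zero, ← map_sub, Submodule.projection_apply_eq_zero_iff hz, LinearMap.mem_ker,
    map_sub, sub_eq_zero]
  exact LinearMap.congr_fun hp v

variable [FiniteDimensional F V]

lemma le_comap_projection_ker (hp : IsIdempotentElem p) (hpx : x ≤ x.comap p)
    (hz : IsCompl z (LinearMap.ker p))
    (hxz : finrank F ↥(x ⊓ z) = finrank F ↥(x ⊓ LinearMap.range p)) :
    x ≤ x.comap (z.projection (LinearMap.ker p) hz) := by
  set s := z.projection (LinearMap.ker p) hz
  have hs {u : V} (hu : u ∈ z) : s (p u) = u :=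
    (projection_ker_apply_apply hp hz u).trans (Submodule.projection_apply_of_mem_left hz hu)
  have hmap : (x ⊓ z).map p = x ⊓ LinearMap.range p := by
    refine Submodule.eq_of_le_of_finrank_le ?_ ?_
    · rintro _ ⟨u, hu, rfl⟩
      exact ⟨hpx hu.1, LinearMap.mem_range_self p u⟩
    · have h : x ⊓ z ≤ ((x ⊓ z).map p).map s := fun u hu => ⟨p u, ⟨u, hu, rfl⟩, hs hu.2⟩
      exact hxz.ge.trans ((Submodule.finrank_mono h).trans (Submodule.finrank_map_le _ _))
  intro v hv
  obtain ⟨u, hu, huv⟩ := hmap.ge ⟨hpx hv, LinearMap.mem_range_self p v⟩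
  rw [Submodule.mem_comap, ← projection_ker_apply_apply hp hz, ← huv, hs hu.2]
  exact hu.1

/-- The shear is `s - p`, where `s` is the projection onto `z` along `ker p`. -/
lemma exists_shearSubspace_range_eq (hp : IsIdempotentElem p) (hpx : x ≤ x.comap p)
    (hz : finrank F z = finrank F (LinearMap.range p))
    (hxz : finrank F ↥(x ⊓ z) = finrank F ↥(x ⊓ LinearMap.range p))
    (hpz : LinearMap.range p ≤ z.map p) :
    ∃ Θ : shears x p, shearSubspace Θ (LinearMap.range p) = z ∧
      ∀ v, Θ.1 v ∈ LinearMap.range p ⊔ z := by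
  have hpp (w : V) : p (p w) = p w := LinearMap.congr_fun hp w
  have hdisj : Disjoint z (LinearMap.ker p) :=
    Submodule.disjoint_ker_of_finrank_le p (hz.le.trans (Submodule.finrank_mono hpz))
  have hcompl : IsCompl z (LinearMap.ker p) :=
    (Submodule.isCompl_iff_disjoint _ _ (by
      rw [hz, LinearMap.finrank_range_add_finrank_ker])).2 hdisj
  set s := z.projection (LinearMap.ker p) hcompl
  have hsz (v : V) : s v ∈ z := Submodule.projection_apply_mem hcompl v
  have hps (v : V) : p (s v) = p v := by
    have h := Submodule.sub_projection_mem hcompl v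
    rwa [LinearMap.mem_ker, map_sub, sub_eq_zero, eq_comm] at h
  have hsp (v : V) : s (p v) = s v := projection_ker_apply_apply hp hcompl v
  have hsx : x ≤ x.comap s := le_comap_projection_ker hp hpx hcompl hxz
  refine ⟨⟨s - p, ?_, ?_, fun v hv => x.sub_mem (hsx hv) (hpx hv)⟩, ?_, fun v =>
    Submodule.sub_mem _ (Submodule.mem_sup_right (hsz v))
      (Submodule.mem_sup_left (LinearMap.mem_range_self p v))⟩
  · ext v
    simp [hps, hpp]
  · ext v
    simp [hsp, hpp]
  · refine Submodule.eq_of_le_of_finrank_le ?_ ((finrank_shearSubspace _ _).trans hz.symm).ge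
    rintro _ ⟨_, ⟨v, rfl⟩, rfl⟩
    change p v + (s (p v) - p (p v)) ∈ z
    rw [hpp, hsp, add_sub_cancel]
    exact hsz v

end ShearOrbit

section WeightFunctions

open Matrix

/-- The additive character `Θ ↦ χ(tr(K Θ))` of `End V`, where `χ` is a fixed primitive additive
character of the finite field `F`. -/
noncomputable def traceCharacter {F V : Type*} [Field F] [Finite F] [AddCommGroup V] [Module F V]
    (K : Module.End F V) : AddChar (Module.End F V) ℂ :=
  (AddChar.FiniteField.primitiveChar_to_Complex F).compAddMonoidHom
    (LinearMap.trace F V ∘ₗ LinearMap.mulLeft F K).toAddMonoidHom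

variable {F V : Type*} [Field F] [Finite F] [AddCommGroup V] [Module F V]

lemma traceCharacter_apply (K Θ : Module.End F V) :
    traceCharacter K Θ =
      AddChar.FiniteField.primitiveChar_to_Complex F (LinearMap.trace F V (K * Θ)) := rfl

variable (x : Submodule F V) (p K : Module.End F V)

/-- The functions on subspaces on which the group of shears acts through the character
`traceCharacter K`. -/
def IsWeightFunction (f : Submodule F V → ℂ) : Prop :=
  ∀ (Θ : shears x p) (y : Submodule F V),
    f (shearSubspace Θ y) = traceCharacter K Θ.1 * f y

variable {x p K} {f : Submodule F V → ℂ} {y : Submodule F V}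

lemma IsWeightFunction.mulVec [Fintype (Submodule F V)] (hf : IsWeightFunction x p K f)
    {M : Matrix (Submodule F V) (Submodule F V) ℂ}
    (hM : ∀ (Θ : shears x p) (y z : Submodule F V),
      M (shearSubspace Θ y) (shearSubspace Θ z) = M y z) :
    IsWeightFunction x p K (M *ᵥ f) := by
  intro Θ y
  rw [mulVec_apply_eq_sum, mulVec_apply_eq_sum, Finset.mul_sum,
    ← Equiv.sum_comp (shearSubspace Θ).toEquiv]
  refine Finset.sum_congr rfl fun z _ => ?_
  rw [RelIso.coe_fn_toEquiv, hM, hf, mul_left_comm]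

variable [FiniteDimensional F V]

lemma IsWeightFunction.lowering_mulVec [Fintype (Submodule F V)] (hf : IsWeightFunction x p K f)
    (s t : ℕ) : IsWeightFunction x p K (lowering x s t *ᵥ f) :=
  hf.mulVec fun Θ => lowering_shearSubspace Θ s t

lemma IsWeightFunction.raising_mulVec [Fintype (Submodule F V)] (hf : IsWeightFunction x p K f)
    (s t : ℕ) : IsWeightFunction x p K (raising x s t *ᵥ f) :=
  hf.mulVec fun Θ y z => lowering_shearSubspace Θ s t z y

/-- Otherwise some multiple of the rank-one shear `u ↦ γ u • v` fixes `y` but has a nontrivial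
character value. -/
lemma IsWeightFunction.dual_apply_eq_zero (hf : IsWeightFunction x p K f) (hy : f y ≠ 0)
    {v : V} (hv : p v = 0) {γ : Module.Dual F V} (hγ : γ ∘ₗ p = γ)
    (hγy : ∀ u ∈ y, γ u • v ∈ y) (hγx : ∀ u ∈ x, γ u • v ∈ x) : γ (K v) = 0 := by
  by_contra h
  obtain ⟨r, hr⟩ := AddChar.ne_one_iff.1
    (AddChar.FiniteField.primitiveChar_to_Complex_isPrimitive F h)
  have hmem {y : Submodule F V} (h : ∀ u ∈ y, γ u • v ∈ y) : y ≤ y.comap (γ.smulRight (r • v)) :=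
    fun u hu => (smul_comm r (γ u) v).subst (motive := (· ∈ y)) (y.smul_mem r (h u hu))
  let Θ : shears x p := ⟨γ.smulRight (r • v), by ext u; simp [hv],
    LinearMap.ext fun u => congrArg (· • r • v) (LinearMap.congr_fun hγ u), hmem hγx⟩
  have hΘ := hf Θ y
  have htrace : LinearMap.trace F V (K * γ.smulRight (r • v)) = γ (K v) * r := by
    have : K * γ.smulRight (r • v) = γ.smulRight (K (r • v)) := by ext u; simp
    rw [this, LinearMap.trace_smulRight, map_smul, map_smul, smul_eq_mul, mul_comm]
  rw [shearSubspace_eq_self (hmem hγy), traceCharacter_apply, htrace] at hΘ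
  exact hr ((mul_eq_right₀ hy).1 hΘ.symm)

end WeightFunctions

section WeightVector

open Matrix LinearMap

variable {F V : Type*} [Field F] [AddCommGroup V] [Module F V]

/-- The data `(p, K)` from which a joint eigenvector is built. The idempotent `p` splits `V` and `x`
compatibly; `K` maps onto `range p` already from `ker p`, and onto its part in `x` already from
`x ⊓ ker p`, so that the character of `K` is nontrivial on enough shears. -/
structure IsWeightDatum (x : Submodule F V) (p K : Module.End F V) : Prop where
  isIdempotentElem : IsIdempotentElem p
  le_comap : x ≤ x.comap p
  range_le : range K ≤ range p
  inf_range_le : x ⊓ range p ≤ (x ⊓ ker p).map K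
  range_le_map : range p ≤ (ker p).map K

/-- The weight function supported on the orbit of `range p` with value `1` there. -/
noncomputable def weightVector [Finite F] (x : Submodule F V) (p K : Module.End F V) :
    Submodule F V → ℂ :=
  Function.extend (fun Θ : shears x p => shearSubspace Θ (range p))
    (fun Θ => traceCharacter K Θ.1) 0

variable [Finite F] {x z : Submodule F V} {p K : Module.End F V} {f : Submodule F V → ℂ}

lemma weightVector_shearSubspace (hp : IsIdempotentElem p) (Θ : shears x p) :
    weightVector x p K (shearSubspace Θ (range p)) = traceCharacter K Θ.1 :=
  (shearSubspace_range_injective hp).extend_apply _ _ Θ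

lemma weightVector_range (hp : IsIdempotentElem p) : weightVector x p K (range p) = 1 := by
  simpa [shearSubspace_zero] using weightVector_shearSubspace (K := K) hp (0 : shears x p)

lemma exists_of_weightVector_ne_zero (h : weightVector x p K z ≠ 0) :
    ∃ Θ : shears x p, shearSubspace Θ (range p) = z := by
  by_contra h'
  exact h (Function.extend_apply' _ _ _ h')

lemma isWeightFunction_weightVector (hp : IsIdempotentElem p) :
    IsWeightFunction x p K (weightVector x p K) := by
  intro Θ z
  by_cases hz : ∃ Θ' : shears x p, shearSubspace Θ' (range p) = z
  · obtain ⟨Θ', rfl⟩ := hz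
    rw [shearSubspace_shearSubspace, weightVector_shearSubspace hp, weightVector_shearSubspace hp,
      Submodule.coe_add, AddChar.map_add_eq_mul]
  · have hz' : ¬ ∃ Θ' : shears x p, shearSubspace Θ' (range p) = shearSubspace Θ z := by
      rintro ⟨Θ', h⟩
      refine hz ⟨-Θ + Θ', ?_⟩
      rw [← shearSubspace_shearSubspace, h, shearSubspace_shearSubspace, neg_add_cancel,
        shearSubspace_zero]
    rw [weightVector, Function.extend_apply' _ _ _ hz, Function.extend_apply' _ _ _ hz',
      Pi.zero_apply, Pi.zero_apply, mul_zero]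

variable [FiniteDimensional F V]

lemma weightVector_mem_gradedPart {i j : ℕ} (hi : finrank F ↥(x ⊓ range p) = i)
    (hij : finrank F (range p) = i + j) : weightVector x p K ∈ gradedPart x i j := by
  intro z hz
  obtain ⟨Θ, rfl⟩ := exists_of_weightVector_ne_zero hz
  rw [finrank_inf_shearSubspace, finrank_shearSubspace]
  exact ⟨hi, hij⟩

lemma IsWeightDatum.dual_apply_eq_zero (h : IsWeightDatum x p K) (hf : IsWeightFunction x p K f)
    (hz : f z ≠ 0) {v : V} (hv : v ∈ ker p) {β : Module.Dual F V}
    (hβz : ∀ u ∈ z, β (p u) • v ∈ z) (hβx : ∀ u ∈ x, β (p u) • v ∈ x) : β (K v) = 0 := by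
  have hpK : p (K v) = K v :=
    h.isIdempotentElem.mem_range_iff.1 (h.range_le (mem_range_self K v))
  have hp : (β ∘ₗ p) ∘ₗ p = β ∘ₗ p := congrArg (β ∘ₗ ·) h.isIdempotentElem
  rw [← hpK]
  exact hf.dual_apply_eq_zero hz hv hp hβz hβx

lemma IsWeightDatum.range_le_map_of_ne_zero (h : IsWeightDatum x p K)
    (hf : IsWeightFunction x p K f) (hz : f z ≠ 0) : range p ≤ z.map p := by
  have hle {S : Submodule F V} (hS : S ≤ ker p) (hSx : ∀ v ∈ S, ∀ β : Module.Dual F V,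
      z.map p ≤ ker β → ∀ u ∈ x, β (p u) • v ∈ x) : S.map K ≤ z.map p := by
    rintro _ ⟨v, hv, rfl⟩
    by_contra hKv
    obtain ⟨β, hβ, hker⟩ := Submodule.exists_le_ker_of_notMem hKv
    refine hβ (h.dual_apply_eq_zero hf hz (hS hv) (fun u hu => ?_) (hSx v hv β hker))
    rw [show β (p u) = 0 from hker ⟨u, hu, rfl⟩, zero_smul]
    exact z.zero_mem
  have hx : x ⊓ range p ≤ z.map p :=
    h.inf_range_le.trans <| hle inf_le_right fun v hv β _ u _ => x.smul_mem _ hv.1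
  refine h.range_le_map.trans <| hle le_rfl fun v _ β hker u hu => ?_
  rw [show β (p u) = 0 from hker (hx ⟨h.le_comap hu, mem_range_self p u⟩), zero_smul]
  exact x.zero_mem

lemma IsWeightDatum.eq_smul_weightVector (h : IsWeightDatum x p K)
    (hf : IsWeightFunction x p K f) {i j : ℕ} (hi : finrank F ↥(x ⊓ range p) = i)
    (hij : finrank F (range p) = i + j) (hfij : f ∈ gradedPart x i j) :
    f = f (range p) • weightVector x p K := by
  ext z
  rw [Pi.smul_apply, smul_eq_mul]
  by_cases hz : ∃ Θ : shears x p, shearSubspace Θ (range p) = z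
  · obtain ⟨Θ, rfl⟩ := hz
    rw [hf, weightVector_shearSubspace h.isIdempotentElem, mul_comm]
  · rw [weightVector, Function.extend_apply' _ _ _ hz, Pi.zero_apply, mul_zero]
    by_contra hfz
    obtain ⟨hxz, hdz⟩ := hfij z hfz
    obtain ⟨Θ, hΘ, -⟩ := exists_shearSubspace_range_eq h.isIdempotentElem h.le_comap
      (hdz.trans hij.symm) (hxz.trans hi.symm) (h.range_le_map_of_ne_zero hf hfz)
    exact hz ⟨Θ, hΘ⟩

lemma IsWeightDatum.lowering_mulVec_weightVector [Fintype (Submodule F V)]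
    (h : IsWeightDatum x p K) {s t : ℕ} (hst : 0 < s + t) :
    lowering x s t *ᵥ weightVector x p K = 0 := by
  ext y
  by_contra hy
  have hle := h.range_le_map_of_ne_zero
    ((isWeightFunction_weightVector h.isIdempotentElem).lowering_mulVec s t) hy
  obtain ⟨z, -, hz⟩ := Finset.exists_ne_zero_of_sum_ne_zero hy
  obtain ⟨Θ, rfl⟩ := exists_of_weightVector_ne_zero (right_ne_zero_of_mul hz)
  have hyz := (of_lowering_apply_ne_zero (left_ne_zero_of_mul hz)).2.1
  have := (Submodule.finrank_mono hle).trans (Submodule.finrank_map_le p y)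
  rw [finrank_shearSubspace] at hyz
  lia

end WeightVector

section WeightVectorEigenvalue

open Matrix LinearMap

variable {F V : Type*} [Field F] [AddCommGroup V] [Module F V] {x y z : Submodule F V}
  {p K : Module.End F V} {g : Submodule F V → ℂ}

lemma range_sup_ker_inf_eq (hp : IsIdempotentElem p) (hy : range p ≤ y) :
    range p ⊔ ker p ⊓ y = y := by
  rw [← sup_inf_assoc_of_le _ hy, (IsIdempotentElem.isCompl hp).sup_eq_top, top_inf_eq]

lemma ker_inf_range_sup_le (hp : IsIdempotentElem p) (hy : y ≤ y.comap p) :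
    ker p ⊓ (range p ⊔ y) ≤ y := by
  rintro _ ⟨hv, hv'⟩
  obtain ⟨_, ⟨s, rfl⟩, w, hw, rfl⟩ := Submodule.mem_sup.1 hv'
  have hs : p s = -p w := by
    rw [← show p (p s) = p s from LinearMap.congr_fun hp s, eq_neg_iff_add_eq_zero, ← map_add]
    exact hv
  rw [hs]
  exact y.add_mem (y.neg_mem (hy hw)) hw

variable [FiniteDimensional F V]

lemma finrank_ker_inf_eq_one (hp : IsIdempotentElem p) (hy : range p ⋖ y) :
    finrank F ↥(ker p ⊓ y) = 1 := by
  have hsup := Submodule.finrank_sup_add_finrank_inf_eq (range p) (ker p ⊓ y)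
  have hdim := (covBy_iff_finrank.1 hy).2
  rw [range_sup_ker_inf_eq hp hy.le, ← inf_assoc, (IsIdempotentElem.isCompl hp).inf_eq_bot,
    bot_inf_eq, finrank_bot] at hsup
  lia

variable [Finite F]

lemma IsWeightDatum.le_range_sup_of_ne_zero (h : IsWeightDatum x p K)
    (hg : IsWeightFunction x p K g) (hy : range p ≤ y) (hyx : y ≤ range p ⊔ x) (hgy : g y ≠ 0) :
    y ≤ range p ⊔ x ⊓ ker p ⊓ ker K := by
  have hx : ker p ⊓ y ≤ x := (inf_le_inf_left _ hyx).trans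
    (ker_inf_range_sup_le h.isIdempotentElem h.le_comap)
  conv_lhs => rw [← range_sup_ker_inf_eq h.isIdempotentElem hy]
  refine sup_le_sup_left (fun v hv => ⟨⟨hx hv, hv.1⟩, ?_⟩) _
  exact (Module.forall_dual_apply_eq_zero_iff F (K v)).1 fun β =>
    h.dual_apply_eq_zero hg hgy hv.1 (fun u _ => y.smul_mem _ hv.2)
      (fun u _ => x.smul_mem _ (hx hv))

lemma IsWeightDatum.disjoint_ker (h : IsWeightDatum x p K) (hz : weightVector x p K z ≠ 0) :
    Disjoint z (ker p) := by
  refine Submodule.disjoint_ker_of_finrank_le p ?_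
  have hle := h.range_le_map_of_ne_zero (isWeightFunction_weightVector h.isIdempotentElem) hz
  obtain ⟨Θ, rfl⟩ := exists_of_weightVector_ne_zero hz
  exact (finrank_shearSubspace Θ _).le.trans (Submodule.finrank_mono hle)

lemma IsWeightDatum.weightVector_eq_one (h : IsWeightDatum x p K)
    (hz : finrank F z = finrank F (range p))
    (hxz : finrank F ↥(x ⊓ z) = finrank F ↥(x ⊓ range p)) (hpz : range p ≤ z.map p)
    (hK : ker p ⊓ (range p ⊔ z) ≤ ker K) : weightVector x p K z = 1 := by
  obtain ⟨Θ, rfl, hΘ⟩ :=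
    exists_shearSubspace_range_eq h.isIdempotentElem h.le_comap hz hxz hpz
  have hKΘ : K * Θ.1 = 0 := LinearMap.ext fun v => hK ⟨apply_shears_apply Θ v, hΘ v⟩
  rw [weightVector_shearSubspace h.isIdempotentElem, traceCharacter_apply, hKΘ, map_zero,
    AddChar.map_zero_eq_one]

lemma IsWeightDatum.weightVector_eq_one_of_covBy (h : IsWeightDatum x p K) (hy : range p ⋖ y)
    (hyx : y ≤ range p ⊔ x) (hKy : ker p ⊓ y ≤ ker K) (hzy : z ⋖ y) (hzx : y ≤ z ⊔ x)
    (hz : ¬ker p ⊓ y ≤ z) : weightVector x p K z = 1 := by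
  have hsup : z ⊔ ker p ⊓ y = y :=
    (hzy.eq_or_eq le_sup_left (sup_le hzy.le inf_le_right)).resolve_left (mt sup_eq_left.1 hz)
  have hdim {u : Submodule F V} (huy : u ⋖ y) (hux : y ≤ u ⊔ x) :
      finrank F u + 1 = finrank F y ∧ finrank F ↥(x ⊓ u) + 1 = finrank F ↥(x ⊓ y) :=
    (of_lowering_apply_ne_zero (s := 1) (t := 0) <| by
      rw [lowering_one_zero_apply, if_pos ⟨huy, hux⟩]
      exact one_ne_zero).2
  have hpz : range p ≤ z.map p := by
    rintro _ ⟨v, rfl⟩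
    obtain ⟨s, hs, l, hl, hsl⟩ := Submodule.mem_sup.1 (hsup.ge (hy.le (mem_range_self p v)))
    refine ⟨s, hs, ?_⟩
    rw [← show p (p v) = p v from LinearMap.congr_fun h.isIdempotentElem v, ← hsl, map_add,
      show p l = 0 from hl.1, add_zero]
  exact h.weightVector_eq_one (by linarith [hdim hzy hzx, hdim hy hyx])
    (by linarith [hdim hzy hzx, hdim hy hyx]) hpz
    ((inf_le_inf_left _ (sup_le hy.le hzy.le)).trans hKy)

open Classical in
lemma IsWeightDatum.raising_apply_mul_weightVector (h : IsWeightDatum x p K) (hy : range p ⋖ y)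
    (hyK : y ≤ range p ⊔ x ⊓ ker p ⊓ ker K) (z : Submodule F V) :
    raising x 1 0 y z * weightVector x p K z = if z ⋖ y ∧ ¬ker p ⊓ y ≤ z then 1 else 0 := by
  have hB : x ⊓ ker p ⊓ ker K ≤ (x ⊓ ker p ⊓ ker K).comap p := fun v hv => by
    rw [Submodule.mem_comap, show p v = 0 from hv.1.2]
    exact Submodule.zero_mem _
  have hle : ker p ⊓ y ≤ x ⊓ ker p ⊓ ker K :=
    (inf_le_inf_left _ hyK).trans (ker_inf_range_sup_le h.isIdempotentElem hB)
  have hBx : x ⊓ ker p ⊓ ker K ≤ x := inf_le_left.trans inf_le_left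
  rw [raising, transpose_apply, lowering_one_zero_apply]
  split_ifs with hzyx hz hz
  · rw [one_mul]
    exact h.weightVector_eq_one_of_covBy hy (hyK.trans (sup_le_sup_left hBx _))
      (hle.trans inf_le_right) hzyx.1 hzyx.2 hz.2
  · rw [one_mul]
    by_contra hwz
    have hker : ker p ⊓ y ≤ z := not_not.1 (not_and.1 hz hzyx.1)
    have hone := finrank_ker_inf_eq_one h.isIdempotentElem hy
    rw [le_bot_iff.1 (h.disjoint_ker hwz hker inf_le_left), finrank_bot] at hone
    exact zero_ne_one hone
  · have hsup : z ⊔ ker p ⊓ y = y := (hz.1.eq_or_eq le_sup_left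
      (sup_le hz.1.le inf_le_right)).resolve_left (mt sup_eq_left.1 hz.2)
    exact absurd ⟨hz.1, hsup.ge.trans (sup_le_sup_left (hle.trans hBx) _)⟩ hzyx
  · rw [zero_mul]

variable [Fintype (Submodule F V)]

lemma IsWeightDatum.raising_mulVec_weightVector_apply (h : IsWeightDatum x p K)
    (hy : range p ⋖ y) (hyK : y ≤ range p ⊔ x ⊓ ker p ⊓ ker K) :
    (raising x 1 0 *ᵥ weightVector x p K) y = Nat.card F ^ finrank F (range p) := by
  classical
  rw [mulVec_apply_eq_sum]
  simp only [h.raising_apply_mul_weightVector hy hyK]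
  rw [sum_ite_one_zero_eq_ncard,
    ncard_cocovers_not_le inf_le_right (finrank_ker_inf_eq_one h.isIdempotentElem hy),
    ← (covBy_iff_finrank.1 hy).2, pow_succ, mul_div_cancel_right₀ _ natCard_ne_zero_complex]

lemma IsWeightDatum.lowering_raising_mulVec_weightVector_range (h : IsWeightDatum x p K) :
    (lowering x 1 0 *ᵥ raising x 1 0 *ᵥ weightVector x p K) (range p) =
      Nat.card F ^ finrank F (range p) *
        ((Nat.card F ^ finrank F ↥(x ⊓ ker p ⊓ ker K) - 1) / (Nat.card F - 1)) := by
  classical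
  set B := x ⊓ ker p ⊓ ker K
  have hterm (y : Submodule F V) :
      lowering x 1 0 (range p) y * (raising x 1 0 *ᵥ weightVector x p K) y =
        Nat.card F ^ finrank F (range p) *
          if range p ⋖ y ∧ y ≤ range p ⊔ B then (1 : ℂ) else 0 := by
    rw [lowering_one_zero_apply]
    by_cases hy : range p ⋖ y ∧ y ≤ range p ⊔ B
    · rw [h.raising_mulVec_weightVector_apply hy.1 hy.2, if_pos hy,
        if_pos ⟨hy.1, hy.2.trans (sup_le_sup_left (inf_le_left.trans inf_le_left) _)⟩, mul_comm]
    · rw [if_neg hy, mul_zero, mul_eq_zero, or_iff_not_imp_left]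
      intro hne
      have hyx : range p ⋖ y ∧ y ≤ range p ⊔ x := by
        by_contra hyx
        exact hne (if_neg hyx)
      by_contra hRy
      exact hy ⟨hyx.1, h.le_range_sup_of_ne_zero
        ((isWeightFunction_weightVector h.isIdempotentElem).raising_mulVec 1 0) hyx.1.le hyx.2 hRy⟩
  have hdim := Submodule.finrank_sup_add_finrank_inf_eq (range p) B
  have hbot : range p ⊓ B = ⊥ := eq_bot_mono
    (inf_le_inf_left _ (inf_le_left.trans inf_le_right))
    (IsIdempotentElem.isCompl h.isIdempotentElem).inf_eq_bot
  rw [hbot, finrank_bot, add_zero] at hdim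
  rw [mulVec_apply_eq_sum]
  simp only [hterm]
  rw [← Finset.mul_sum, sum_ite_one_zero_eq_ncard, ncard_covers le_sup_left, hdim, pow_add,
    mul_div_cancel_left₀ _ (pow_ne_zero _ natCard_ne_zero_complex)]

lemma IsWeightDatum.casimir_mulVec_weightVector [DecidableEq (Submodule F V)]
    (h : IsWeightDatum x p K) :
    casimir x *ᵥ weightVector x p K = ((Nat.card F : ℂ) ^
      (2 * finrank F ↥(x ⊓ range p) + finrank F ↥(x ⊓ ker p ⊓ ker K))) • weightVector x p K := by
  obtain ⟨j, hj⟩ := Nat.exists_eq_add_of_le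
    (Submodule.finrank_mono (inf_le_right : x ⊓ range p ≤ range p))
  have hmem : weightVector x p K ∈ gradedPart x _ j := weightVector_mem_gradedPart rfl hj
  have hwt := isWeightFunction_weightVector (x := x) (K := K) h.isIdempotentElem
  rw [casimir_mulVec_eq_smul_iff hmem, loweringRaisingCommutator, sub_mulVec,
    ← mulVec_mulVec, ← mulVec_mulVec, h.lowering_mulVec_weightVector (by lia), mulVec_zero,
    sub_zero, h.eq_smul_weightVector ((hwt.raising_mulVec 1 0).lowering_mulVec 1 0) rfl hj
      (lowering_mulVec_mem (raising_mulVec_mem hmem)),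
    h.lowering_raising_mulVec_weightVector_range, hj]
  have := natCard_ne_zero_complex (F := F)
  have := natCard_sub_one_ne_zero_complex (F := F)
  congr 1
  rw [pow_add, pow_add, pow_mul']
  field_simp

end WeightVectorEigenvalue

section WeightDatumExistence

open LinearMap

variable {F V : Type*} [Field F] [AddCommGroup V] [Module F V] {x C : Submodule F V}

lemma exists_le_finrank_eq {n : ℕ} {S : Submodule F V} (h : n ≤ finrank F S) :
    ∃ T ≤ S, finrank F T = n := by
  obtain ⟨f, hf⟩ := exists_linearIndependent_of_le_finrank h
  refine ⟨(Submodule.span F (Set.range f)).map S.subtype, Submodule.map_subtype_le _ _, ?_⟩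
  rw [Submodule.finrank_map_subtype_eq, finrank_span_eq_card hf, Fintype.card_fin]

lemma exists_map_eq_range_le [FiniteDimensional F V] {S T : Submodule F V}
    (h : finrank F T ≤ finrank F S) : ∃ f : Module.End F V, S.map f = T ∧ range f ≤ T := by
  obtain ⟨S', hS', hdim⟩ := exists_le_finrank_eq h
  obtain ⟨g, hg⟩ := (LinearEquiv.ofFinrankEq S' T hdim).toLinearMap.exists_extend
  have hrange : range (T.subtype ∘ₗ g) ≤ T := by
    rintro _ ⟨v, rfl⟩
    exact (g v).2
  refine ⟨T.subtype ∘ₗ g, le_antisymm (map_le_range.trans hrange) fun t ht => ?_, hrange⟩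
  obtain ⟨s, hs⟩ := (LinearEquiv.ofFinrankEq S' T hdim).surjective ⟨t, ht⟩
  exact ⟨s, hS' s.2, congrArg Subtype.val ((LinearMap.congr_fun hg s).trans hs)⟩

lemma exists_end_eqOn_eqOn (hC : IsCompl x C) (f g : Module.End F V) :
    ∃ h : Module.End F V, Set.EqOn h f x ∧ Set.EqOn h g C ∧ range h ≤ x.map f ⊔ C.map g := by
  refine ⟨ofIsCompl hC (f.domRestrict x) (g.domRestrict C),
    fun v hv => ofIsCompl_apply_left hC ⟨v, hv⟩, fun v hv => ofIsCompl_apply_right hC ⟨v, hv⟩, ?_⟩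
  rw [range_ofIsCompl, range_domRestrict, range_domRestrict]

lemma map_congr_of_eqOn {f g : Module.End F V} {S : Submodule F V} (h : Set.EqOn f g S) :
    S.map f = S.map g :=
  SetLike.coe_injective (Set.image_congr h)

lemma exists_isIdempotentElem_inf_range_eq (hC : IsCompl x C) {A B : Submodule F V} (hA : A ≤ x)
    (hB : B ≤ C) : ∃ p : Module.End F V, IsIdempotentElem p ∧ x ≤ x.comap p ∧ C ≤ C.comap p ∧
      x ⊓ range p = A ∧ C ⊓ range p = B := by
  obtain ⟨A', hA'⟩ := A.exists_isCompl
  obtain ⟨B', hB'⟩ := B.exists_isCompl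
  obtain ⟨p, hpx, hpC, hp⟩ :=
    exists_end_eqOn_eqOn hC (A.projection A' hA') (B.projection B' hB')
  have hfix : ∀ v ∈ A ⊔ B, p v = v := by
    intro v hv
    obtain ⟨a, ha, b, hb, rfl⟩ := Submodule.mem_sup.1 hv
    rw [map_add, hpx (hA ha), hpC (hB hb), Submodule.projection_apply_of_mem_left hA' ha,
      Submodule.projection_apply_of_mem_left hB' hb]
  have hle : range p ≤ A ⊔ B := hp.trans <| sup_le_sup
    (map_le_range.trans (Submodule.range_projection hA').le)
    (map_le_range.trans (Submodule.range_projection hB').le)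
  have hrange : range p = A ⊔ B := le_antisymm hle fun v hv => ⟨v, hfix v hv⟩
  refine ⟨p, LinearMap.ext fun v => hfix _ (hle (mem_range_self p v)),
    fun v hv => ?_, fun v hv => ?_, ?_, ?_⟩
  · rw [Submodule.mem_comap, hpx hv]
    exact hA (Submodule.projection_apply_mem hA' v)
  · rw [Submodule.mem_comap, hpC hv]
    exact hB (Submodule.projection_apply_mem hB' v)
  · rw [hrange, inf_comm, sup_inf_assoc_of_le _ hA, (hC.disjoint.mono_right hB).symm.eq_bot,
      sup_bot_eq]
  · rw [hrange, inf_comm, sup_comm, sup_inf_assoc_of_le _ hB, (hC.disjoint.mono_left hA).eq_bot,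
      sup_bot_eq]

lemma inf_range_sup_inf_range_eq {p : Module.End F V} (hC : IsCompl x C) (hx : x ≤ x.comap p)
    (hC' : C ≤ C.comap p) : x ⊓ range p ⊔ C ⊓ range p = range p := by
  refine le_antisymm (sup_le inf_le_right inf_le_right) ?_
  refine (range_eq_map p).le.trans ?_
  rw [← hC.sup_eq_top, Submodule.map_sup]
  exact sup_le_sup (le_inf (Submodule.map_le_iff_le_comap.2 hx) map_le_range)
    (le_inf (Submodule.map_le_iff_le_comap.2 hC') map_le_range)

variable [FiniteDimensional F V]

lemma finrank_map_add_finrank_inf_ker (f : Module.End F V) (S : Submodule F V) :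
    finrank F (S.map f) + finrank F ↥(S ⊓ ker f) = finrank F S := by
  rw [← finrank_range_add_finrank_ker (f.domRestrict S), range_domRestrict, ker_domRestrict,
    ← Submodule.finrank_map_subtype_eq S, Submodule.map_comap_subtype]

lemma finrank_inf_range_add_finrank_inf_ker {p : Module.End F V}
    (hp : IsIdempotentElem p) (hx : x ≤ x.comap p) :
    finrank F ↥(x ⊓ range p) + finrank F ↥(x ⊓ ker p) = finrank F x := by
  have hmap : x.map p = x ⊓ range p :=
    le_antisymm (le_inf (Submodule.map_le_iff_le_comap.2 hx) map_le_range)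
      fun v hv => ⟨v, hv.1, hp.mem_range_iff.1 hv.2⟩
  rw [← hmap, finrank_map_add_finrank_inf_ker]

lemma exists_map_eq_map_eq_range_le (hC : IsCompl x C) {D E S T : Submodule F V} (hD : D ≤ x)
    (hE : E ≤ C) (hS : finrank F S ≤ finrank F D) (hT : finrank F T ≤ finrank F E) :
    ∃ K : Module.End F V, D.map K = S ∧ E.map K = T ∧ range K ≤ S ⊔ T := by
  obtain ⟨f, hfD, hf⟩ := exists_map_eq_range_le hS
  obtain ⟨g, hgE, hg⟩ := exists_map_eq_range_le hT
  obtain ⟨K, hKx, hKC, hK⟩ := exists_end_eqOn_eqOn hC f g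
  exact ⟨K, (map_congr_of_eqOn (hKx.mono hD)).trans hfD,
    (map_congr_of_eqOn (hKC.mono hE)).trans hgE,
    hK.trans (sup_le_sup (map_le_range.trans hf) (map_le_range.trans hg))⟩

lemma finrank_sup_of_disjoint {S T : Submodule F V} (h : Disjoint S T) :
    finrank F ↥(S ⊔ T) = finrank F S + finrank F T := by
  rw [← Submodule.finrank_sup_add_finrank_inf_eq, h.eq_bot, finrank_bot, add_zero]

lemma exists_isWeightDatum (x : Submodule F V) {ν μ ρ : ℕ} (hν : 2 * ν + ρ ≤ finrank F x)
    (hρ : ρ ≤ μ) (hμ : 2 * μ + finrank F x ≤ finrank F V + ρ) :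
    ∃ p K : Module.End F V, IsWeightDatum x p K ∧ finrank F ↥(x ⊓ range p) = ν ∧
      finrank F (range p) = ν + μ ∧
      finrank F ↥(x ⊓ ker p ⊓ ker K) + (2 * ν + ρ) = finrank F x := by
  obtain ⟨C, hC⟩ := x.exists_isCompl
  have hdimC := Submodule.finrank_add_eq_of_isCompl hC
  obtain ⟨A, hAx, hA⟩ := exists_le_finrank_eq (show ν ≤ finrank F x by lia)
  obtain ⟨B, hBC, hB⟩ := exists_le_finrank_eq (show μ ≤ finrank F C by lia)
  obtain ⟨T, hTB, hT⟩ := exists_le_finrank_eq (hρ.trans_eq hB.symm)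
  obtain ⟨U, hTU, hU⟩ := IsModularLattice.exists_disjoint_and_sup_eq hTB
  obtain ⟨p, hp, hpx, hpC, hxp, hCp⟩ := exists_isIdempotentElem_inf_range_eq hC hAx hBC
  have hrange : A ⊔ B = range p := by rw [← hxp, ← hCp, inf_range_sup_inf_range_eq hC hpx hpC]
  have hkerx := finrank_inf_range_add_finrank_inf_ker hp hpx
  have hkerC := finrank_inf_range_add_finrank_inf_ker hp hpC
  have hdimB := finrank_sup_of_disjoint hTU
  have hdimAT := finrank_sup_of_disjoint (hC.disjoint.mono hAx (hTB.trans hBC))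
  have hdimp := finrank_sup_of_disjoint (hC.disjoint.mono hAx hBC)
  rw [hU] at hdimB
  rw [hrange] at hdimp
  rw [hxp] at hkerx
  rw [hCp] at hkerC
  -- The rank of `K` on `x ⊓ ker p` must be `ν + ρ`; the rest of `range p` is reached from `C`.
  obtain ⟨K, hKD, hKE, hK⟩ := exists_map_eq_map_eq_range_le hC (D := x ⊓ ker p) (E := C ⊓ ker p)
    (S := A ⊔ T) (T := U) inf_le_left inf_le_left (by lia) (by lia)
  have hsup : A ⊔ T ⊔ U = range p := by rw [sup_assoc, hU, hrange]
  have hKdim := finrank_map_add_finrank_inf_ker K (x ⊓ ker p)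
  rw [hKD] at hKdim
  refine ⟨p, K, ⟨hp, hpx, hK.trans hsup.le, ?_, ?_⟩, by rw [hxp, hA], by lia, by lia⟩
  · rw [hxp, hKD]
    exact le_sup_left
  · rw [← hsup]
    exact sup_le (hKD ▸ Submodule.map_mono inf_le_right) (hKE ▸ Submodule.map_mono inf_le_right)

end WeightDatumExistence

open Classical in
/-- there exists a simple `H`-submodule of `ℂP` with lower
endpoint `(ν, μ)` and index `ρ` iff `0 ≤ ν ≤ a`, `0 ≤ μ ≤ b`, and
`max{0, 2μ-b} ≤ ρ ≤ min{a-2ν, μ}`. -/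
theorem exists_simple_H_module_iff (F : Type) [Field F] [Fintype F] (a b : ℕ)
    (x : Submodule F (Fin (a + b) → F)) (hx : finrank F x = a)
    (ν μ : ℕ) (ρ : ℤ) :
    (∃ W : Submodule ℂ (Submodule F (Fin (a + b) → F) → ℂ),
        MatSimple (Halg F a b x) W ∧
        lowNu F a b x W = ν ∧ lowMu F a b x W = μ ∧ idxH F a b x W = ρ)
      ↔ (ν ≤ a ∧ μ ≤ b ∧
          max 0 (2 * (μ : ℤ) - b) ≤ ρ ∧ ρ ≤ min ((a : ℤ) - 2 * ν) (μ : ℤ)) := by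
  constructor
  · rintro ⟨W, hW, rfl, rfl, rfl⟩
    exact hW.endpoint_index_bounds hx
  · rintro ⟨-, -, hρ, hρ'⟩
    obtain ⟨hρ₀, hμρ⟩ := max_le_iff.1 hρ
    obtain ⟨hνρ, hρμ⟩ := le_min_iff.1 hρ'
    lift ρ to ℕ using hρ₀
    obtain ⟨p, K, h, hν, hνμ, hK⟩ := exists_isWeightDatum x (ν := ν) (μ := μ) (ρ := ρ)
      (by lia) (by lia) (by rw [finrank_fin_fun]; lia)
    have hp := h.isIdempotentElem
    have hw₀ : weightVector x p K ≠ 0 := fun h₀ =>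
      one_ne_zero ((weightVector_range hp).symm.trans (congrFun h₀ _))
    obtain ⟨W, hW, hWν, hWμ, hWρ⟩ := exists_matSimple_of_casimir_mulVec hx
      (weightVector_mem_gradedPart hν hνμ) hw₀ (h.lowering_mulVec_weightVector (by lia))
      (h.lowering_mulVec_weightVector (by lia)) h.casimir_mulVec_weightVector
    exact ⟨W, hW, hWν, hWμ, by rw [hWρ]; lia⟩
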